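/- arXiv:2110.10740 — 2 statements merged into one kernel-verified Lean document; each statement's English description precedes it below -/
import Mathlib

section
/- Let P = (X, ≺) be a poset with |X| = n elements which has a belt at z ∈ X, and let ω : Low(P) → ℝ_{>0} be a positive weight function on the lower ideals of P satisfying the submodular property. Define q(L) = ω({x ∈ X : L(x) < L(z)}) for each linear extension L, and N_q(k) = Σ_{L ∈ E_k} q(L). Then for every integer 1 < k < n: N_q(k)² ≥ N_q(k−1)·N_q(k+1). -/
open scoped Classical BigOperators

noncomputable section

variable {X : Type*} [Fintype X] [DecidableEq X] [PartialOrder X]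

/-- A linear extension of the poset `X` with `n = |X|` elements, encoded as a bijection
`σ : X ≃ Fin n`; the value `L(x) ∈ {1, …, n}` of the usual description corresponds to
`(σ x : ℕ) + 1`. -/
def IsLinExt (σ : X ≃ Fin (Fintype.card X)) : Prop :=
  ∀ x y : X, x < y → σ x < σ y

/-- The weighted count `N_ω(k) = Σ_{L ∈ E, L(z) = k} Π_{x : L(x) < L(z)} ω(x)` over linear
extensions placing `z` in position `k`. -/
def Nw (ω : X → ℝ) (z : X) (k : ℕ) : ℝ :=
  ∑ σ ∈ Finset.univ.filter (fun σ : X ≃ Fin (Fintype.card X) =>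
      IsLinExt σ ∧ (σ z : ℕ) = k - 1),
    ∏ x ∈ Finset.univ.filter (fun x : X => σ x < σ z), ω x

/-- A lower ideal (down-closed set) of the poset. -/
def IsLowerIdeal (S : Finset X) : Prop :=
  ∀ x ∈ S, ∀ y : X, y ≤ x → y ∈ S

/-- The set `inc(z)` of elements incomparable to `z`. -/
def incSet (z : X) : Finset X :=
  Finset.univ.filter (fun x => ¬ x ≤ z ∧ ¬ z ≤ x)

/-- The weighted count `N_q(k) = Σ_{L ∈ E, L(z) = k} ω({x : L(x) < L(z)})` over linear
extensions placing `z` in position `k`, where `ω` is a weight on lower ideals. -/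
def Nq (ω : Finset X → ℝ) (z : X) (k : ℕ) : ℝ :=
  ∑ σ ∈ Finset.univ.filter (fun σ : X ≃ Fin (Fintype.card X) =>
      IsLinExt σ ∧ (σ z : ℕ) = k - 1),
    ω (Finset.univ.filter (fun x : X => σ x < σ z))

namespace BeltAux

open Filter Topology

variable {α : Type*} [DecidableEq α]

/-- Down-closed finite sets for a relation. -/
def Low (r : α → α → Prop) (S : Finset α) : Prop := ∀ a ∈ S, ∀ b, r b a → b ∈ S

/-- Linear extensions of the relation `r` on `S`, as lists. -/
def exts (r : α → α → Prop) (S : Finset α) : Finset (List α) :=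
  S.val.lists.toFinset.filter (fun l => l.Pairwise (fun a b => ¬ r b a))

theorem mem_exts {r : α → α → Prop} {S : Finset α} {l : List α} :
    l ∈ exts r S ↔ l.Nodup ∧ (∀ a, a ∈ l ↔ a ∈ S) ∧ l.Pairwise (fun a b => ¬ r b a) := by
  unfold exts
  rw [Finset.mem_filter, Multiset.mem_toFinset, Multiset.mem_lists_iff, ← and_assoc]
  refine and_congr_left fun _ => ?_
  constructor
  · intro h
    have h' : S.val = (l : Multiset α) := h
    refine ⟨?_, ?_⟩
    · rw [← Multiset.coe_nodup, ← h']; exact S.nodup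
    · intro a; rw [← Finset.mem_val, h', Multiset.mem_coe]
  · rintro ⟨h1, h2⟩
    show S.val = (l : Multiset α)
    refine (Multiset.Nodup.ext S.nodup (Multiset.coe_nodup.2 h1)).2 ?_
    intro a; rw [Finset.mem_val, Multiset.mem_coe, h2]

/-- The number of linear extensions. -/
def ne (r : α → α → Prop) (S : Finset α) : ℕ := (exts r S).card

theorem ne_swap (r : α → α → Prop) (S : Finset α) : ne (fun a b => r b a) S = ne r S := by
  unfold ne
  refine Finset.card_nbij' List.reverse List.reverse ?_ ?_ ?_ ?_
  · intro l hl
    simp only [Finset.mem_coe, mem_exts] at hl ⊢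
    simpa [List.pairwise_reverse] using hl
  · intro l hl
    simp only [Finset.mem_coe, mem_exts] at hl ⊢
    simpa [List.pairwise_reverse] using hl
  · intro l _; simp
  · intro l _; simp

theorem ne_empty (r : α → α → Prop) : ne r ∅ = 1 := by
  unfold ne
  rw [Finset.card_eq_one]
  refine ⟨[], ?_⟩
  ext l
  rw [mem_exts, Finset.mem_singleton]
  constructor
  · rintro ⟨_, h, _⟩
    exact List.eq_nil_iff_forall_not_mem.2 (fun a ha => by simpa using (h a).1 ha)
  · rintro rfl; simp

theorem ne_rec (r : α → α → Prop) (S : Finset α) (hS : Low r S)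
    (hne : S.Nonempty) :
    ne r S = ∑ m ∈ S.filter (fun m => Low r (S.erase m)), ne r (S.erase m) := by
  unfold ne
  rw [← Finset.card_sigma]
  symm
  refine Finset.card_bij (fun p _ => p.2 ++ [p.1]) ?_ ?_ ?_
  · rintro ⟨m, l⟩ h
    simp only [Finset.mem_sigma, Finset.mem_filter, mem_exts] at h ⊢
    obtain ⟨⟨hm, hlow⟩, hnd, hmem, hp⟩ := h
    refine ⟨?_, ?_, ?_⟩
    · rw [List.nodup_append]
      refine ⟨hnd, by simp, ?_⟩
      intro a ha b hb
      have := (hmem a).1 ha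
      simp at hb this
      rw [hb]; exact this.1
    · intro a
      simp [hmem]
      by_cases h : a = m <;> simp [h, hm]
    · rw [List.pairwise_append]
      refine ⟨hp, by simp, ?_⟩
      intro a ha b hb hba
      have hb' : b = m := by simpa using hb
      subst hb'
      have := hlow a ((hmem a).1 ha) b hba
      simp at this
  · rintro ⟨m, l⟩ h ⟨m', l'⟩ h' heq
    simp only at heq
    obtain ⟨h1, h2⟩ := List.append_inj' heq rfl
    simp at h2
    subst h1 h2; rfl
  · intro l hl
    rw [mem_exts] at hl
    obtain ⟨hnd, hmem, hp⟩ := hl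
    rcases List.eq_nil_or_concat l with h | ⟨l', m, h⟩
    · obtain ⟨a, ha⟩ := hne
      rw [← hmem, h] at ha; simp at ha
    · rw [List.concat_eq_append] at h
      subst h
      rw [List.nodup_append] at hnd
      rw [List.pairwise_append] at hp
      have hm : m ∉ l' := fun hm => hnd.2.2 m hm m (by simp) rfl
      refine ⟨⟨m, l'⟩, ?_, rfl⟩
      simp only [Finset.mem_sigma, Finset.mem_filter, mem_exts]
      have hme : ∀ a, a ∈ l' ↔ a ∈ S.erase m := by
        intro a
        rw [Finset.mem_erase, ← hmem a]
        simp
        constructor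
        · intro h; exact ⟨fun e => hm (e ▸ h), Or.inl h⟩
        · rintro ⟨h1, h2⟩; exact h2.resolve_right h1
      refine ⟨⟨(hmem m).1 (by simp), ?_⟩, hnd.1, hme, hp.1⟩
      intro a ha b hba
      rw [Finset.mem_erase]
      refine ⟨?_, hS a (Finset.mem_of_mem_erase ha) b hba⟩
      rintro rfl
      exact hp.2.2 a ((hme a).2 ha) b (by simp) hba

/-- Number of strict chains of down-sets of length `k` ending at `S`. -/
def cc (r : α → α → Prop) : ℕ → Finset α → ℝ
  | 0, S => if S = ∅ then 1 else 0
  | k + 1, S => ∑ T ∈ S.ssubsets.filter (fun T => Low r T), cc r k T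

/-- Number of weak chains of down-sets of length `n` ending at `S`. -/
def gg (r : α → α → Prop) : ℕ → Finset α → ℝ
  | 0, S => if S = ∅ then 1 else 0
  | k + 1, S => ∑ T ∈ S.powerset, if Low r T then gg r k T else 0

theorem cc_zero_of_lt (r : α → α → Prop) (k : ℕ) : ∀ S : Finset α, S.card < k → cc r k S = 0 := by
  induction k with
  | zero => intro S h; omega
  | succ k ih =>
    intro S h
    rw [cc]
    refine Finset.sum_eq_zero fun T hT => ih T ?_
    have := Finset.card_lt_card (Finset.mem_ssubsets.1 (Finset.mem_filter.1 hT).1)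
    omega

theorem cc_card (r : α → α → Prop) (k : ℕ) :
    ∀ S : Finset α, Low r S → S.card = k → cc r k S = ne r S := by
  induction k with
  | zero =>
    intro S _ h
    rw [Finset.card_eq_zero] at h
    subst h
    simp [cc, ne_empty]
  | succ k ih =>
    intro S hS h
    have hne : S.Nonempty := Finset.card_pos.1 (by omega)
    rw [ne_rec r S hS hne, cc, Nat.cast_sum]
    have h1 : ∀ m ∈ S.filter (fun m => Low r (S.erase m)),
        (ne r (S.erase m) : ℝ) = cc r k (S.erase m) := by
      intro m hm
      rw [Finset.mem_filter] at hm
      rw [ih _ hm.2]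
      rw [Finset.card_erase_of_mem hm.1]; omega
    rw [Finset.sum_congr rfl h1]
    rw [← Finset.sum_image (s := S.filter (fun m => Low r (S.erase m))) (g := fun m => S.erase m)
      (f := fun T => cc r k T)]
    · symm
      refine Finset.sum_subset ?_ ?_
      · intro T hT
        rw [Finset.mem_image] at hT
        obtain ⟨m, hm, rfl⟩ := hT
        rw [Finset.mem_filter] at hm
        rw [Finset.mem_filter, Finset.mem_ssubsets]
        exact ⟨Finset.erase_ssubset hm.1, hm.2⟩
      · intro T hT hT'
        rw [Finset.mem_filter, Finset.mem_ssubsets] at hT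
        apply cc_zero_of_lt
        by_contra hcon
        apply hT'
        obtain ⟨m, hm, hsub⟩ := Finset.ssubset_iff_exists_subset_erase.1 hT.1
        have : T = S.erase m := Finset.eq_of_subset_of_card_le hsub
          (by rw [Finset.card_erase_of_mem hm]; omega)
        rw [Finset.mem_image]
        exact ⟨m, Finset.mem_filter.2 ⟨hm, this ▸ hT.2⟩, this.symm⟩
    · intro a ha b hb hab
      simp only [Finset.coe_filter, Set.mem_ofPred_eq] at ha hb
      exact Finset.erase_injOn S ha.1 hb.1 hab

theorem gg_eq (r : α → α → Prop) (n : ℕ) : ∀ S : Finset α, Low r S → ∀ M, n < M →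
    gg r n S = ∑ k ∈ Finset.range M, (n.choose k : ℝ) * cc r k S := by
  induction n with
  | zero =>
    intro S _ M hM
    obtain ⟨M, rfl⟩ : ∃ m, M = m + 1 := ⟨M - 1, by omega⟩
    rw [Finset.sum_range_succ']
    simp [gg, cc]
  | succ n ih =>
    intro S hS M hM
    obtain ⟨M, rfl⟩ : ∃ m, M = m + 1 := ⟨M - 1, by omega⟩
    have hM' : n < M := by omega
    have e1 : gg r (n + 1) S = gg r n S + ∑ T ∈ S.ssubsets.filter (fun T => Low r T), gg r n T := by
      rw [gg, ← Finset.sum_filter, ← Finset.insert_erase (Finset.mem_powerset_self S)]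
      have : S.powerset.erase S = S.ssubsets := rfl
      rw [this, Finset.filter_insert, if_pos hS, Finset.sum_insert]
      simp
    rw [e1, ih S hS (M + 1) (by omega)]
    have e2 : ∑ T ∈ S.ssubsets.filter (fun T => Low r T), gg r n T
        = ∑ k ∈ Finset.range M, (n.choose k : ℝ) * cc r (k + 1) S := by
      simp only [cc, Finset.mul_sum]
      rw [Finset.sum_comm]
      refine Finset.sum_congr rfl fun T hT => ?_
      exact ih T (Finset.mem_filter.1 hT).2 M hM'
    rw [e2, Finset.sum_range_succ', Finset.sum_range_succ' (n := M)]
    have : ∀ k, (((n + 1).choose (k + 1) : ℕ) : ℝ) = n.choose k + n.choose (k + 1) := by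
      intro k; rw [Nat.choose_succ_succ]; push_cast; rfl
    simp only [this, add_mul, Finset.sum_add_distrib]
    simp
    ring

theorem gg_eq' (r : α → α → Prop) (n : ℕ) (S : Finset α) (hS : Low r S) :
    gg r n S = ∑ k ∈ Finset.range (S.card + 1), (n.choose k : ℝ) * cc r k S := by
  rw [gg_eq r n S hS (n + S.card + 1) (by omega)]
  symm
  refine Finset.sum_subset (fun k hk => ?_) (fun k _ hk => ?_)
  · simp at hk ⊢; omega
  · simp at hk
    rw [cc_zero_of_lt r k S (by omega), mul_zero]

theorem tendsto_choose_div (k s : ℕ) (h : k ≤ s) :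
    Tendsto (fun n : ℕ => (n.choose k : ℝ) / (n : ℝ) ^ s) atTop
      (𝓝 (if k = s then 1 / (s.factorial : ℝ) else 0)) := by
  have hr : Tendsto (fun n : ℕ => (n : ℝ) * (1 / (n : ℝ))) atTop (𝓝 1) := by
    refine tendsto_const_nhds.congr' ?_
    filter_upwards [eventually_gt_atTop 0] with n hn
    field_simp
  have h1 := ProbabilityTheory.tendsto_choose_mul_pow_atTop k hr
  have h2 : Tendsto (fun n : ℕ => (1 / (n : ℝ)) ^ (s - k)) atTop
      (𝓝 ((0 : ℝ) ^ (s - k))) := tendsto_one_div_atTop_nhds_zero_nat.pow _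
  have h3 := h1.mul h2
  have e : (if k = s then 1 / (s.factorial : ℝ) else 0)
      = 1 ^ k / (k.factorial : ℝ) * 0 ^ (s - k) := by
    split_ifs with hk
    · subst hk; simp
    · rw [zero_pow (by omega)]; simp
  rw [e]
  refine h3.congr fun n => ?_
  rw [mul_assoc, ← pow_add, Nat.add_sub_cancel' h]
  simp [div_eq_mul_inv]

theorem gg_tendsto (r : α → α → Prop) (S : Finset α) (hS : Low r S) :
    Tendsto (fun n : ℕ => gg r n S / (n : ℝ) ^ S.card) atTop
      (𝓝 ((ne r S : ℝ) / (S.card.factorial : ℝ))) := by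
  have h : Tendsto (fun n : ℕ => ∑ k ∈ Finset.range (S.card + 1),
      ((n.choose k : ℝ) / (n : ℝ) ^ S.card) * cc r k S) atTop
      (𝓝 (∑ k ∈ Finset.range (S.card + 1),
        (if k = S.card then 1 / (S.card.factorial : ℝ) else 0) * cc r k S)) := by
    refine tendsto_finsetSum _ fun k hk => ?_
    exact (tendsto_choose_div k S.card (by simp at hk; omega)).mul_const _
  have e : ∑ k ∈ Finset.range (S.card + 1),
        (if k = S.card then 1 / (S.card.factorial : ℝ) else 0) * cc r k S
        = (ne r S : ℝ) / (S.card.factorial : ℝ) := by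
    rw [Finset.sum_eq_single S.card]
    · rw [if_pos rfl, cc_card r _ S hS rfl]; ring
    · intro k _ hk; simp [hk]
    · intro hk; simp at hk
  rw [e] at h
  refine h.congr fun n => ?_
  rw [gg_eq' r n S hS, Finset.sum_div]
  refine Finset.sum_congr rfl fun k _ => ?_
  ring

theorem gg_nonneg (r : α → α → Prop) (n : ℕ) : ∀ S : Finset α, 0 ≤ gg r n S := by
  induction n with
  | zero => intro S; rw [gg]; split_ifs <;> norm_num
  | succ n ih =>
    intro S; rw [gg]
    refine Finset.sum_nonneg fun T _ => ?_
    split_ifs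
    · exact ih T
    · exact le_rfl

theorem Low.inter {r : α → α → Prop} {S T : Finset α} (hS : Low r S) (hT : Low r T) :
    Low r (S ∩ T) := by
  intro a ha b hb
  rw [Finset.mem_inter] at ha ⊢
  exact ⟨hS a ha.1 b hb, hT a ha.2 b hb⟩

theorem Low.union {r : α → α → Prop} {S T : Finset α} (hS : Low r S) (hT : Low r T) :
    Low r (S ∪ T) := by
  intro a ha b hb
  rw [Finset.mem_union] at ha ⊢
  exact ha.imp (fun h => hS a h b hb) (fun h => hT a h b hb)

theorem gg_super (r : α → α → Prop) (n : ℕ) : ∀ S T : Finset α,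
    gg r n S * gg r n T ≤ gg r n (S ∩ T) * gg r n (S ∪ T) := by
  induction n with
  | zero =>
    intro S T
    simp only [gg]
    by_cases hS : S = ∅ <;> by_cases hT : T = ∅ <;> simp [hS, hT]
  | succ n ih =>
    intro S T
    simp only [gg]
    set f : Finset α → ℝ := fun T => if Low r T then gg r n T else 0 with hf
    have hf0 : 0 ≤ f := by
      intro T
      simp only [hf, Pi.zero_apply]
      split_ifs
      · exact gg_nonneg r n T
      · exact le_rfl
    have key := four_functions_theorem f f f f hf0 hf0 hf0 hf0 (fun A B => by
      by_cases hA : Low r A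
      · by_cases hB : Low r B
        · have h1 : f A = gg r n A := if_pos hA
          have h2 : f B = gg r n B := if_pos hB
          have h3 : f (A ⊓ B) = gg r n (A ∩ B) := if_pos (hA.inter hB)
          have h4 : f (A ⊔ B) = gg r n (A ∪ B) := if_pos (hA.union hB)
          rw [h1, h2, h3, h4]
          exact ih A B
        · have h2 : f B = 0 := if_neg hB
          rw [h2, mul_zero]
          exact mul_nonneg (hf0 _) (hf0 _)
      · have h2 : f A = 0 := if_neg hA
        rw [h2, zero_mul]
        exact mul_nonneg (hf0 _) (hf0 _)) S.powerset T.powerset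
    refine key.trans (mul_le_mul ?_ ?_ (Finset.sum_nonneg fun _ _ => hf0 _)
      (Finset.sum_nonneg fun _ _ => hf0 _))
    · refine Finset.sum_le_sum_of_subset_of_nonneg ?_ (fun _ _ _ => hf0 _)
      intro C hC
      obtain ⟨A, hA, B, hB, rfl⟩ := Finset.mem_infs.1 hC
      rw [Finset.mem_powerset] at *
      exact Finset.inter_subset_inter hA hB
    · refine Finset.sum_le_sum_of_subset_of_nonneg ?_ (fun _ _ _ => hf0 _)
      intro C hC
      obtain ⟨A, hA, B, hB, rfl⟩ := Finset.mem_sups.1 hC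
      rw [Finset.mem_powerset] at *
      exact Finset.union_subset_union hA hB

theorem ne_fishburn (r : α → α → Prop) (S T : Finset α)
    (hS : Low r S) (hT : Low r T) :
    ((ne r S : ℝ) / (S.card.factorial : ℝ)) * ((ne r T : ℝ) / (T.card.factorial : ℝ)) ≤
    ((ne r (S ∩ T) : ℝ) / ((S ∩ T).card.factorial : ℝ)) *
      ((ne r (S ∪ T) : ℝ) / ((S ∪ T).card.factorial : ℝ)) := by
  refine le_of_tendsto_of_tendsto ((gg_tendsto r S hS).mul (gg_tendsto r T hT))
    ((gg_tendsto r _ (hS.inter hT)).mul (gg_tendsto r _ (hS.union hT))) ?_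
  refine Filter.Eventually.of_forall fun n => ?_
  show gg r n S / (n : ℝ) ^ S.card * (gg r n T / (n : ℝ) ^ T.card) ≤
    gg r n (S ∩ T) / (n : ℝ) ^ (S ∩ T).card * (gg r n (S ∪ T) / (n : ℝ) ^ (S ∪ T).card)
  rw [div_mul_div_comm, div_mul_div_comm, ← pow_add, ← pow_add,
    Finset.card_inter_add_card_union]
  refine div_le_div_of_nonneg_right ?_ (by positivity)
  exact gg_super r n S T

/-- One-step comparison. -/
theorem ne_step (r : α → α → Prop) (I J : Finset α) (x : α)
    (hI : Low r (insert x I)) (hJ : Low r J) (hIJ : I ⊆ J) (hx : x ∉ J) :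
    ne r (insert x I) * ne r J ≤ ne r I * ne r (insert x J) := by
  have h := ne_fishburn r (insert x I) J hI hJ
  have e1 : insert x I ∩ J = I := by
    rw [Finset.insert_inter_of_notMem hx, Finset.inter_eq_left.2 hIJ]
  have e2 : insert x I ∪ J = insert x J := by
    rw [Finset.insert_union, Finset.union_eq_right.2 hIJ]
  rw [e1, e2, Finset.card_insert_of_notMem (fun h => hx (hIJ h)), Finset.card_insert_of_notMem hx,
    Nat.factorial_succ, Nat.factorial_succ] at h
  have hc : I.card ≤ J.card := Finset.card_le_card hIJ
  have hp1 : (0 : ℝ) < I.card.factorial := by positivity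
  have hp2 : (0 : ℝ) < J.card.factorial := by positivity
  have hc' : (I.card : ℝ) ≤ J.card := by exact_mod_cast hc
  rw [div_mul_div_comm, div_mul_div_comm, div_le_div_iff₀ (by positivity) (by positivity)] at h
  push_cast at h
  have h2 : ((ne r (insert x I) : ℝ) * ne r J) * (J.card + 1) ≤
      (ne r I * ne r (insert x J)) * (I.card + 1) := by
    have : (0 : ℝ) < I.card.factorial * J.card.factorial := by positivity
    refine le_of_mul_le_mul_right ?_ this
    linarith
  have h3 : ((ne r (insert x I) : ℝ) * ne r J) ≤ (ne r I * ne r (insert x J)) := by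
    have : (0 : ℝ) < (J.card : ℝ) + 1 := by positivity
    refine le_of_mul_le_mul_right (h2.trans ?_) this
    gcongr
  exact_mod_cast h3

theorem append_cons_unique {l₁ l₂ m₁ m₂ : List α} {x : α} (h : l₁ ++ x :: l₂ = m₁ ++ x :: m₂)
    (h1 : x ∉ l₁) (h2 : x ∉ m₁) : l₁ = m₁ ∧ l₂ = m₂ := by
  induction l₁ generalizing m₁ with
  | nil =>
    cases m₁ with
    | nil => simpa using h
    | cons b m₁ => simp at h h2; exact absurd h.1 h2.1
  | cons a l₁ ih =>
    cases m₁ with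
    | nil => simp at h h1; exact absurd h.1.symm h1.1
    | cons b m₁ =>
      simp at h h1 h2
      obtain ⟨e1, e2⟩ := ih h.2 h1.2 h2.2
      exact ⟨by rw [h.1, e1], e2⟩

theorem ne_upper (r : α → α → Prop) (S : Finset α) (x y : α) (h0 : Low r S)
    (h2 : Low r (insert y (insert x S))) (hx : x ∉ S) (hy : y ∉ insert x S) (hxy : r x y) :
    ne r (insert y (insert x S)) ≤
      ∑ I ∈ S.powerset.filter (fun I => Low r I ∧ Low r (insert x I)),
        ne r (insert x I) * ne r (S \ I) := by
  unfold ne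
  simp only [← Finset.card_product]
  rw [← Finset.card_sigma]
  refine Finset.card_le_card_of_surjOn (fun p => p.2.1 ++ y :: p.2.2) ?_
  intro l hl
  rw [Finset.mem_coe, mem_exts] at hl
  obtain ⟨hnd, hmem, hp⟩ := hl
  have hyl : y ∈ l := (hmem y).2 (by simp)
  obtain ⟨l1, l2, rfl⟩ := List.append_of_mem hyl
  rw [List.nodup_append] at hnd
  obtain ⟨hn1, hn2, hn3⟩ := hnd
  rw [List.nodup_cons] at hn2
  rw [List.pairwise_append, List.pairwise_cons] at hp
  obtain ⟨hp1, ⟨hp2, hp3⟩, hp4⟩ := hp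
  have hyl1 : y ∉ l1 := fun h => hn3 y h y (by simp) rfl
  have hd : ∀ a ∈ l1, a ∉ l2 := fun a h h' => hn3 a h a (by simp [h']) rfl
  have hxne : x ≠ y := by rintro rfl; simp at hy
  have hxl : x ∈ l1 := by
    have := (hmem x).2 (by simp)
    rw [List.mem_append, List.mem_cons] at this
    rcases this with h | h | h
    · exact h
    · exact absurd h hxne
    · exact absurd hxy (hp2 x h)
  have hlow1 : Low r l1.toFinset := by
    intro a ha b hba
    rw [List.mem_toFinset] at ha ⊢
    have hb := (hmem b).2 (h2 a ((hmem a).1 (List.mem_append_left _ ha)) b hba)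
    rw [List.mem_append] at hb
    refine hb.resolve_right fun h => ?_
    exact hp4 a ha b h hba
  have hsub : ∀ a ∈ l1, a = x ∨ a ∈ S := by
    intro a ha
    have := (hmem a).1 (List.mem_append_left _ ha)
    rw [Finset.mem_insert, Finset.mem_insert] at this
    exact this.resolve_left (fun e => hyl1 (e ▸ ha))
  have hins : insert x (l1.toFinset ∩ S) = l1.toFinset := by
    ext a
    rw [Finset.mem_insert, Finset.mem_inter, List.mem_toFinset]
    constructor
    · rintro (rfl | h)
      · exact hxl
      · exact h.1
    · intro h
      exact (hsub a h).imp id (fun h' => ⟨h, h'⟩)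
  refine ⟨⟨l1.toFinset ∩ S, l1, l2⟩, ?_, rfl⟩
  simp only [Finset.coe_sigma, Set.mem_sigma_iff, Finset.mem_coe, Finset.mem_filter,
    Finset.mem_powerset, Finset.mem_product, mem_exts]
  refine ⟨⟨Finset.inter_subset_right, hlow1.inter h0, by rw [hins]; exact hlow1⟩,
    ⟨hn1, fun a => ?_, hp1⟩, ⟨hn2.2, fun a => ?_, hp3⟩⟩
  · rw [hins, List.mem_toFinset]
  · rw [Finset.mem_sdiff, Finset.mem_inter, List.mem_toFinset]
    constructor
    · intro ha
      have hal1 : a ∉ l1 := fun h => hd a h ha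
      have := (hmem a).1 (by simp [ha])
      rw [Finset.mem_insert, Finset.mem_insert] at this
      rcases this with rfl | rfl | h
      · exact absurd ha hn2.1
      · exact absurd hxl hal1
      · exact ⟨h, fun h' => hal1 h'.1⟩
    · rintro ⟨h, h'⟩
      have hm := (hmem a).2 (by simp [h])
      rw [List.mem_append, List.mem_cons] at hm
      rcases hm with h1 | rfl | h1
      · exact absurd ⟨h1, h⟩ h'
      · exact absurd (Finset.mem_insert_of_mem h) hy
      · exact h1

theorem ne_lower (r : α → α → Prop) (hr : ∀ a, ¬ r a a) (S : Finset α) (x : α) (hx : x ∉ S) :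
    ∑ I ∈ S.powerset.filter (fun I => Low r I ∧ Low r (insert x I)),
        ne r I * ne r (S \ I) ≤ ne r (insert x S) := by
  unfold ne
  simp only [← Finset.card_product]
  rw [← Finset.card_sigma]
  refine Finset.card_le_card_of_injOn (fun p => p.2.1 ++ x :: p.2.2) ?_ ?_
  · rintro ⟨I, l1, l2⟩ h
    simp only [Finset.coe_sigma, Set.mem_sigma_iff, Finset.mem_coe, Finset.mem_filter,
      Finset.mem_powerset, Finset.mem_product, mem_exts] at h ⊢
    obtain ⟨⟨hIS, hI, hxI⟩, ⟨hn1, hm1, hp1⟩, ⟨hn2, hm2, hp2⟩⟩ := h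
    have hm2' : ∀ a, a ∈ l2 → a ∈ S ∧ a ∉ I := fun a h => by
      have := (hm2 a).1 h
      rwa [Finset.mem_sdiff] at this
    have hxl2 : x ∉ l2 := fun h => hx (hm2' x h).1
    have hxI' : x ∉ I := fun h => hx (hIS h)
    refine ⟨?_, ?_, ?_⟩
    · rw [List.nodup_append, List.nodup_cons]
      refine ⟨hn1, ⟨hxl2, hn2⟩, ?_⟩
      intro a ha b hb
      rintro rfl
      rw [hm1] at ha
      rw [List.mem_cons] at hb
      rcases hb with rfl | hb
      · exact hxI' ha
      · exact (hm2' _ hb).2 ha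
    · intro a
      rw [List.mem_append, List.mem_cons, hm1, hm2, Finset.mem_sdiff, Finset.mem_insert]
      constructor
      · rintro (h | h | h)
        · exact Or.inr (hIS h)
        · exact Or.inl h
        · exact Or.inr h.1
      · rintro (h | h)
        · exact Or.inr (Or.inl h)
        · by_cases h' : a ∈ I
          · exact Or.inl h'
          · exact Or.inr (Or.inr ⟨h, h'⟩)
    · rw [List.pairwise_append, List.pairwise_cons]
      refine ⟨hp1, ⟨?_, hp2⟩, ?_⟩
      · intro b hb hbx
        have := hxI x (Finset.mem_insert_self _ _) b hbx
        rw [Finset.mem_insert] at this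
        rcases this with rfl | h
        · exact hr _ hbx
        · exact (hm2' b hb).2 h
      · intro a ha b hb hba
        have hbI := hI a ((hm1 a).1 ha) b hba
        rw [List.mem_cons] at hb
        rcases hb with rfl | hb
        · exact hxI' hbI
        · exact (hm2' b hb).2 hbI
  · rintro ⟨I, l1, l2⟩ h ⟨I', l1', l2'⟩ h' heq
    simp only [Finset.coe_sigma, Set.mem_sigma_iff, Finset.mem_coe, Finset.mem_filter,
      Finset.mem_powerset, Finset.mem_product, mem_exts] at h h' heq
    have hx1 : x ∉ l1 := fun hh => hx (h.1.1 ((h.2.1.2.1 x).1 hh))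
    have hx2 : x ∉ l1' := fun hh => hx (h'.1.1 ((h'.2.1.2.1 x).1 hh))
    obtain ⟨rfl, rfl⟩ := append_cons_unique heq hx1 hx2
    have : I = I' := by
      ext a; rw [← h.2.1.2.1, ← h'.2.1.2.1]
    subst this
    rfl

/-- Log-concavity of the number of linear extensions along a chain step. -/
theorem ne_logconc (r : α → α → Prop) (hr : ∀ a, ¬ r a a) (S : Finset α) (x y : α)
    (h0 : Low r S) (h2 : Low r (insert y (insert x S))) (hx : x ∉ S) (hy : y ∉ insert x S)
    (hxy : r x y) :
    ne r (insert y (insert x S)) * ne r S ≤ ne r (insert x S) ^ 2 := by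
  calc ne r (insert y (insert x S)) * ne r S
      ≤ (∑ I ∈ S.powerset.filter (fun I => Low r I ∧ Low r (insert x I)),
        ne r (insert x I) * ne r (S \ I)) * ne r S :=
        Nat.mul_le_mul_right _ (ne_upper r S x y h0 h2 hx hy hxy)
    _ = ∑ I ∈ S.powerset.filter (fun I => Low r I ∧ Low r (insert x I)),
        (ne r (insert x I) * ne r S) * ne r (S \ I) := by
        rw [Finset.sum_mul]
        exact Finset.sum_congr rfl fun I _ => by ring
    _ ≤ ∑ I ∈ S.powerset.filter (fun I => Low r I ∧ Low r (insert x I)),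
        (ne r I * ne r (insert x S)) * ne r (S \ I) := by
        refine Finset.sum_le_sum fun I hI => Nat.mul_le_mul_right _ ?_
        rw [Finset.mem_filter, Finset.mem_powerset] at hI
        exact ne_step r I S x hI.2.2 h0 hI.1 hx
    _ = ne r (insert x S) * ∑ I ∈ S.powerset.filter (fun I => Low r I ∧ Low r (insert x I)),
        ne r I * ne r (S \ I) := by
        rw [Finset.mul_sum]
        exact Finset.sum_congr rfl fun I _ => by ring
    _ ≤ ne r (insert x S) * ne r (insert x S) := Nat.mul_le_mul_left _ (ne_lower r hr S x hx)
    _ = ne r (insert x S) ^ 2 := by ring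

end BeltAux

namespace BeltAux

variable {Y : Type*} [Fintype Y] [DecidableEq Y] [PartialOrder Y]

/-- Possible sets of elements preceding `z`. -/
def ZId (z : Y) (S : Finset Y) : Prop := IsLowerIdeal S ∧ z ∉ S ∧ ∀ a, a < z → a ∈ S

theorem ZId.inc {z : Y} {S T : Finset Y} (hS : ZId z S) (hT : ZId z T) {a : Y} (ha : a ∈ S)
    (ha' : a ∉ T) : a ∈ incSet z := by
  simp only [incSet, Finset.mem_filter, Finset.mem_univ, true_and]
  refine ⟨fun h => ?_, fun h => hS.2.1 (hS.1 a ha z h)⟩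
  rcases h.lt_or_eq with h | rfl
  · exact ha' (hT.2.2 a h)
  · exact hS.2.1 ha

theorem ZId.sub {z : Y} (hbelt : ∀ x ∈ incSet z, ∀ y ∈ incSet z, x ≤ y ∨ y ≤ x)
    {S T : Finset Y} (hS : ZId z S) (hT : ZId z T) (hc : S.card ≤ T.card) : S ⊆ T := by
  intro s hs
  by_contra hsT
  have : ¬ T ⊆ S := fun h => hsT ((Finset.eq_of_subset_of_card_le h hc) ▸ hs)
  obtain ⟨t, ht, htS⟩ := Finset.not_subset.1 this
  rcases hbelt s (hS.inc hT hs hsT) t (hT.inc hS ht htS) with h | h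
  · exact hsT (hT.1 t ht s h)
  · exact htS (hS.1 s hs t h)

theorem zid_of_linExt {z : Y} {σ : Y ≃ Fin (Fintype.card Y)} (hσ : IsLinExt σ) :
    ZId z (Finset.univ.filter (fun x : Y => σ x < σ z)) := by
  refine ⟨?_, by simp, fun a ha => by simpa using hσ a z ha⟩
  intro x hx y hyx
  simp only [Finset.mem_filter, Finset.mem_univ, true_and] at hx ⊢
  rcases hyx.lt_or_eq with h | rfl
  · exact (hσ y x h).trans hx
  · exact hx

theorem card_below (z : Y) (σ : Y ≃ Fin (Fintype.card Y)) :
    (Finset.univ.filter (fun x : Y => σ x < σ z)).card = (σ z : ℕ) := by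
  rw [← Fin.card_Iio (σ z), ← Finset.card_map σ.toEmbedding]
  congr 1
  ext i
  simp only [Finset.mem_map_equiv, Finset.mem_filter, Finset.mem_univ, true_and,
    Equiv.apply_symm_apply, Finset.mem_Iio]

theorem low_iff (S : Finset Y) : Low (fun a b : Y => a < b) S ↔ IsLowerIdeal S := by
  constructor
  · intro h x hx y hyx
    rcases hyx.lt_or_eq with h' | rfl
    · exact h x hx y h'
    · exact hx
  · intro h x hx y hyx
    exact h x hx y hyx.le

theorem card_filter {z : Y} (hbelt : ∀ x ∈ incSet z, ∀ y ∈ incSet z, x ≤ y ∨ y ≤ x)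
    {S : Finset Y} (hS : ZId z S) :
    (Finset.univ.filter (fun σ : Y ≃ Fin (Fintype.card Y) =>
      IsLinExt σ ∧ (σ z : ℕ) = S.card)).card =
    ne (fun a b : Y => a < b) S * ne (fun a b : Y => a < b) (Finset.univ \ insert z S) := by
  unfold ne
  rw [← Finset.card_product]
  have hinj : Set.InjOn (fun p : List Y × List Y => p.1 ++ z :: p.2)
      (exts (fun a b : Y => a < b) S ×ˢ
        exts (fun a b : Y => a < b) (Finset.univ \ insert z S) : Finset _) := by
    rintro ⟨l1, l2⟩ h ⟨l1', l2'⟩ h' heq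
    simp only [Finset.mem_coe, Finset.mem_product, mem_exts] at h h' heq
    have hx1 : z ∉ l1 := fun hh => hS.2.1 ((h.1.2.1 z).1 hh)
    have hx2 : z ∉ l1' := fun hh => hS.2.1 ((h'.1.2.1 z).1 hh)
    obtain ⟨rfl, rfl⟩ := append_cons_unique heq hx1 hx2
    rfl
  rw [← Finset.card_image_of_injOn hinj]
  refine Finset.card_bij (fun σ _ => List.ofFn σ.symm) ?_ ?_ ?_
  · intro σ hσ
    simp only [Finset.mem_filter, Finset.mem_univ, true_and] at hσ
    obtain ⟨hσ, hk⟩ := hσ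
    have hbelow : Finset.univ.filter (fun x : Y => σ x < σ z) = S := by
      refine Finset.eq_of_subset_of_card_le (ZId.sub hbelt (zid_of_linExt hσ) hS ?_) ?_
      · rw [card_below, hk]
      · rw [card_below, hk]
    have hall : ∀ a, a ∈ List.ofFn σ.symm := by
      intro a; rw [List.mem_ofFn]; exact ⟨σ a, by simp⟩
    have hlt : (List.ofFn σ.symm).Pairwise (fun a b => σ a < σ b) := by
      rw [List.pairwise_ofFn]; intro i j hij; simpa using hij
    generalize hl : List.ofFn σ.symm = l at hall hlt
    obtain ⟨l1, l2, rfl⟩ := List.append_of_mem (hall z)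
    have hp : (l1 ++ z :: l2).Pairwise (fun a b => ¬ b < a) :=
      hlt.imp (fun {a b} h h' => lt_asymm h (hσ _ _ h'))
    have hnd : (l1 ++ z :: l2).Nodup :=
      hlt.imp (fun {a b} h h' => by rw [h'] at h; exact lt_irrefl _ h)
    rw [List.pairwise_append, List.pairwise_cons] at hlt hp
    rw [List.nodup_append, List.nodup_cons] at hnd
    have h1 : ∀ a, a ∈ l1 ↔ a ∈ S := by
      intro a
      rw [← hbelow]
      simp only [Finset.mem_filter, Finset.mem_univ, true_and]
      constructor
      · intro h; exact hlt.2.2 a h z (by simp)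
      · intro h
        have := hall a
        rw [List.mem_append, List.mem_cons] at this
        rcases this with h' | rfl | h'
        · exact h'
        · exact absurd h (lt_irrefl _)
        · exact absurd h (lt_asymm (hlt.2.1.1 a h'))
    rw [Finset.mem_image]
    refine ⟨⟨l1, l2⟩, ?_, rfl⟩
    rw [Finset.mem_product, mem_exts, mem_exts]
    refine ⟨⟨hnd.1, h1, hp.1⟩, ⟨hnd.2.1.2, fun a => ?_, hp.2.1.2⟩⟩
    rw [Finset.mem_sdiff, Finset.mem_insert, ← h1]
    constructor
    · intro h
      refine ⟨Finset.mem_univ _, ?_⟩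
      rintro (rfl | h')
      · exact hnd.2.1.1 h
      · exact hnd.2.2 a h' a (by simp [h]) rfl
    · rintro ⟨_, h⟩
      have := hall a
      rw [List.mem_append, List.mem_cons] at this
      tauto
  · intro σ _ τ _ h
    have := List.ofFn_injective h
    have h2 : σ.symm = τ.symm := DFunLike.coe_injective this
    exact Equiv.symm_bijective.injective h2
  · intro l hl
    rw [Finset.mem_image] at hl
    obtain ⟨⟨l1, l2⟩, h, hl⟩ := hl
    rw [Finset.mem_product, mem_exts, mem_exts] at h
    obtain ⟨⟨hn1, hm1, hp1⟩, ⟨hn2, hm2, hp2⟩⟩ := h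
    simp only [Finset.mem_sdiff, Finset.mem_univ, Finset.mem_insert, true_and, not_or] at hm1 hm2 hp1 hp2 hn1 hn2 hl
    have hlen1 : l1.length = S.card := by
      rw [← List.toFinset_card_of_nodup hn1]
      congr 1
      ext a; rw [List.mem_toFinset, hm1]
    have hnd : l.Nodup := by
      rw [← hl, List.nodup_append, List.nodup_cons]
      refine ⟨hn1, ⟨fun h => ((hm2 z).1 h).1 rfl, hn2⟩, ?_⟩
      rintro a ha b hb rfl
      rw [hm1] at ha
      rw [List.mem_cons] at hb
      rcases hb with rfl | hb
      · exact hS.2.1 ha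
      · exact ((hm2 _).1 hb).2 ha
    have hall : ∀ a, a ∈ l := by
      intro a
      rw [← hl, List.mem_append, List.mem_cons, hm1, hm2]
      tauto
    have hp : l.Pairwise (fun a b => ¬ b < a) := by
      rw [← hl, List.pairwise_append, List.pairwise_cons]
      refine ⟨hp1, ⟨?_, hp2⟩, ?_⟩
      · intro b hb hbz
        exact ((hm2 b).1 hb).2 (hS.2.2 b hbz)
      · intro a ha b hb hba
        have hbS := hS.1 a ((hm1 a).1 ha) b hba.le
        rw [List.mem_cons] at hb
        rcases hb with rfl | hb
        · exact hS.2.1 hbS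
        · exact ((hm2 b).1 hb).2 hbS
    have hlen : l.length = Fintype.card Y := by
      rw [← List.toFinset_card_of_nodup hnd, ← Finset.card_univ]
      congr 1
      ext a; simp [hall a]
    let σ : Y ≃ Fin (Fintype.card Y) :=
      (hnd.getEquivOfForallMemList l hall).symm.trans (finCongr hlen)
    have hσ : ∀ i, σ.symm i = l.get (finCongr hlen.symm i) := fun i => rfl
    have hof : List.ofFn σ.symm = l := by
      apply List.ext_getElem
      · simp [hlen]
      · intro i h1 h2
        rw [List.getElem_ofFn, hσ]
        simp
    refine ⟨σ, ?_, hof⟩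
    simp only [Finset.mem_filter, Finset.mem_univ, true_and]
    constructor
    · intro x y hxy
      rw [← hof, List.pairwise_ofFn] at hp
      by_contra hcon
      have hne : σ y ≠ σ x := fun h => hxy.ne (σ.injective h).symm
      have := hp (lt_of_le_of_ne (not_lt.1 hcon) hne)
      simp at this
      exact this hxy
    · have hlt : S.card < Fintype.card Y := by
        rw [← hlen, ← hl, ← hlen1]; simp
      have : σ.symm ⟨S.card, hlt⟩ = z := by
        rw [hσ]
        subst hl
        simp [← hlen1]
      have h2 : σ z = ⟨S.card, hlt⟩ := by rw [← this]; simp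
      rw [h2]

theorem Nq_eq {z : Y} (hbelt : ∀ x ∈ incSet z, ∀ y ∈ incSet z, x ≤ y ∨ y ≤ x)
    (ω : Finset Y → ℝ) {S : Finset Y} (hS : ZId z S) (k : ℕ) (hk : S.card = k - 1) :
    Nq ω z k = ω S * (ne (fun a b : Y => a < b) S *
      ne (fun a b : Y => a < b) (Finset.univ \ insert z S)) := by
  unfold Nq
  rw [← hk]
  have : ∀ σ ∈ Finset.univ.filter (fun σ : Y ≃ Fin (Fintype.card Y) =>
      IsLinExt σ ∧ (σ z : ℕ) = S.card), ω (Finset.univ.filter (fun x : Y => σ x < σ z)) = ω S := by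
    intro σ hσ
    simp only [Finset.mem_filter, Finset.mem_univ, true_and] at hσ
    congr 1
    refine Finset.eq_of_subset_of_card_le (ZId.sub hbelt (zid_of_linExt hσ.1) hS ?_) ?_
    · rw [card_below, hσ.2]
    · rw [card_below, hσ.2]
  rw [Finset.sum_congr rfl this, Finset.sum_const, card_filter hbelt hS, nsmul_eq_mul]
  push_cast
  ring

theorem exists_zid (ω : Finset Y → ℝ) (z : Y) (k : ℕ) (h : Nq ω z k ≠ 0) :
    ∃ S, ZId z S ∧ S.card = k - 1 := by
  obtain ⟨σ, hσ, _⟩ := Finset.exists_ne_zero_of_sum_ne_zero h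
  simp only [Finset.mem_filter, Finset.mem_univ, true_and] at hσ
  exact ⟨_, zid_of_linExt hσ.1, by rw [card_below, hσ.2]⟩

end BeltAux

/-- **Submodular Stanley inequality for posets with belts.**  Suppose `P` has a belt at `z`
(the elements incomparable to `z` form a chain), and `ω` is a positive weight function on
lower ideals satisfying the submodular property.  Then `N_q(k)² ≥ N_q(k-1)·N_q(k+1)` for
all `1 < k < n`. -/
theorem submodular_stanley_inequality_belt
    (z : X)
    (hbelt : ∀ x ∈ incSet z, ∀ y ∈ incSet z, x ≤ y ∨ y ≤ x)
    (ω : Finset X → ℝ)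
    (hω : ∀ S : Finset X, IsLowerIdeal S → 0 < ω S)
    (hsub : ∀ x y : X, x ∈ incSet z → y ∈ incSet z → x < y →
      ∀ S : Finset X, IsLowerIdeal S → IsLowerIdeal (insert x S) →
        IsLowerIdeal (insert y (insert x S)) →
        ω (insert y (insert x S)) * ω S ≤ (ω (insert x S)) ^ 2)
    (k : ℕ) (hk1 : 1 < k) (hk2 : k < Fintype.card X) :
    Nq ω z (k - 1) * Nq ω z (k + 1) ≤ (Nq ω z k) ^ 2 := by
  by_cases hz1 : Nq ω z (k - 1) = 0
  · rw [hz1, zero_mul]; positivity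
  by_cases hz2 : Nq ω z (k + 1) = 0
  · rw [hz2, mul_zero]; positivity
  obtain ⟨S, hS, hSc⟩ := BeltAux.exists_zid ω z _ hz1
  obtain ⟨T, hT, hTc⟩ := BeltAux.exists_zid ω z _ hz2
  have hST : S ⊆ T := hS.sub hbelt hT (by omega)
  have hcard : (T \ S).card = 2 := by
    rw [Finset.card_sdiff_of_subset hST]; omega
  obtain ⟨x, y, hxy, hTS, hxi, hyi⟩ : ∃ x y, x < y ∧ T \ S = {x, y} ∧ x ∈ incSet z ∧
      y ∈ incSet z := by
    obtain ⟨x, y, hne, he⟩ := Finset.card_eq_two.1 hcard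
    have hx : x ∈ T \ S := by rw [he]; simp
    have hy : y ∈ T \ S := by rw [he]; simp
    rw [Finset.mem_sdiff] at hx hy
    have hxi := hT.inc hS hx.1 hx.2
    have hyi := hT.inc hS hy.1 hy.2
    rcases hbelt x hxi y hyi with h | h
    · exact ⟨x, y, lt_of_le_of_ne h hne, he, hxi, hyi⟩
    · exact ⟨y, x, lt_of_le_of_ne h hne.symm, by rw [he, Finset.pair_comm], hyi, hxi⟩
  have hx : x ∈ T \ S := by rw [hTS]; simp
  have hy : y ∈ T \ S := by rw [hTS]; simp
  rw [Finset.mem_sdiff] at hx hy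
  have hTe : T = insert y (insert x S) := by
    rw [← Finset.sdiff_union_of_subset hST, hTS]
    ext a; simp; tauto
  have hy' : y ∉ insert x S := by
    rw [Finset.mem_insert]; rintro (h | h)
    · exact hxy.ne h.symm
    · exact hy.2 h
  have hyT : y ≠ x := hxy.ne'
  have hxz : x ≠ z := fun h => hT.2.1 (h ▸ hx.1)
  have hyz : y ≠ z := fun h => hT.2.1 (h ▸ hy.1)
  have hM : BeltAux.ZId z (insert x S) := by
    refine ⟨?_, ?_, fun a ha => Finset.mem_insert_of_mem (hS.2.2 a ha)⟩
    · intro a ha b hb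
      rcases Finset.mem_insert.1 ha with rfl | ha
      · have hbT := hT.1 a hx.1 b hb
        rw [hTe, Finset.mem_insert] at hbT
        refine hbT.resolve_left ?_
        rintro rfl
        exact absurd hxy (not_lt_of_ge hb)
      · exact Finset.mem_insert_of_mem (hS.1 a ha b hb)
    · rw [Finset.mem_insert]; rintro (h | h)
      · exact hxz h.symm
      · exact hS.2.1 h
  have hMc : (insert x S).card = k - 1 := by
    rw [Finset.card_insert_of_notMem hx.2]; omega
  rw [BeltAux.Nq_eq hbelt ω hS _ hSc, BeltAux.Nq_eq hbelt ω hT _ hTc,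
    BeltAux.Nq_eq hbelt ω hM _ hMc]
  have hw : ω T * ω S ≤ ω (insert x S) ^ 2 := by
    rw [hTe]
    exact hsub x y hxi hyi hxy S hS.1 hM.1 (hTe ▸ hT.1)
  have hlow : BeltAux.ne (fun a b : X => a < b) T * BeltAux.ne (fun a b : X => a < b) S ≤
      BeltAux.ne (fun a b : X => a < b) (insert x S) ^ 2 := by
    have h2 := (BeltAux.low_iff T).2 hT.1
    rw [hTe] at h2 ⊢
    exact BeltAux.ne_logconc _ (fun a => lt_irrefl a) S x y ((BeltAux.low_iff S).2 hS.1) h2 hx.2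
      hy' hxy
  set U : Finset X := Finset.univ \ insert z T with hU
  have hUM : Finset.univ \ insert z (insert x S) = insert y U := by
    ext a
    simp only [hU, hTe, Finset.mem_sdiff, Finset.mem_univ, true_and, Finset.mem_insert, not_or]
    have h1 : y ∉ S := hy.2
    by_cases ha : a = y
    · subst ha; simp [hyz, hyT, h1]
    · simp [ha]
  have hUS : Finset.univ \ insert z S = insert x (insert y U) := by
    rw [← hUM]
    ext a
    simp only [Finset.mem_sdiff, Finset.mem_univ, true_and, Finset.mem_insert, not_or]
    have h1 : x ∉ S := hx.2
    by_cases ha : a = x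
    · subst ha; simp [hxz, h1]
    · simp [ha]
  have hup : ∀ W : Finset X, BeltAux.ZId z W →
      BeltAux.Low (fun a b : X => b < a) (Finset.univ \ insert z W) := by
    intro W hW a ha b hb
    simp only [Finset.mem_sdiff, Finset.mem_univ, true_and, Finset.mem_insert, not_or] at ha ⊢
    constructor
    · rintro rfl
      exact ha.2 (hW.2.2 a hb)
    · intro h
      exact ha.2 (hW.1 b h a hb.le)
  have hupp : BeltAux.ne (fun a b : X => a < b) (Finset.univ \ insert z S) *
      BeltAux.ne (fun a b : X => a < b) U ≤
      BeltAux.ne (fun a b : X => a < b) (Finset.univ \ insert z (insert x S)) ^ 2 := by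
    have h2 := hup S hS
    rw [hUS] at h2
    rw [hUS, hUM]
    have := BeltAux.ne_logconc (fun a b : X => b < a) (fun a => lt_irrefl a) U y x
      (hup T hT) h2 (by simp [hU, hy.1]) (by simp [hU, hx.1, hyT.symm]) hxy
    simpa only [BeltAux.ne_swap (fun a b : X => a < b)] using this
  have hlow' : (BeltAux.ne (fun a b : X => a < b) T : ℝ) * BeltAux.ne (fun a b : X => a < b) S ≤
      (BeltAux.ne (fun a b : X => a < b) (insert x S) : ℝ) ^ 2 := by exact_mod_cast hlow
  have hupp' : (BeltAux.ne (fun a b : X => a < b) (Finset.univ \ insert z S) : ℝ) *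
      BeltAux.ne (fun a b : X => a < b) U ≤
      (BeltAux.ne (fun a b : X => a < b) (Finset.univ \ insert z (insert x S)) : ℝ) ^ 2 := by
    exact_mod_cast hupp
  have hwT := (hω T hT.1).le
  have hwS := (hω S hS.1).le
  have hmul := mul_le_mul hw (mul_le_mul hlow' hupp' (by positivity) (by positivity))
    (by positivity) (by positivity)
  refine le_trans (le_of_eq ?_) (hmul.trans (le_of_eq ?_)) <;> ring
end
end

section
/- Let G = (V, E) be a simple connected graph on |V| = N vertices, let I(k) denote the number of spanning forests of G with k edges, and let k be an integer with 1 ≤ k ≤ N − 2. Then I(k)² ≥ (1 + 1/k)·(1 + 1/(C(N−k+1, 2) − 1))·I(k−1)·I(k+1), where C(N−k+1, 2) is the binomial coefficient; moreover, the inequality is strict whenever 1 < k < N − 2. -/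
open scoped Classical BigOperators

noncomputable section

/-- The number of spanning forests with `k` edges of a simple graph `G`:
sets of `k` edges of `G` that contain no cycle. -/
def numForests (V : Type*) [Fintype V] [DecidableEq V] (G : SimpleGraph V) (k : ℕ) : ℕ :=
  (Finset.univ.filter (fun F : Finset (Sym2 V) =>
    (F : Set (Sym2 V)) ⊆ G.edgeSet ∧ F.card = k ∧
      (SimpleGraph.fromEdgeSet (F : Set (Sym2 V))).IsAcyclic)).card

namespace GMLC

lemma growth_contra {α : Type*} (Q n : α → ℝ) (f : α → α) (A B : ℝ) (hB : 0 < B) (hAB : B < A)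
    (h0 : ∀ u, Q u ≤ n u) (hQ : ∀ u, A * Q u ≤ Q (f u)) (hn : ∀ u, n (f u) ≤ B * n u) (u : α) :
    Q u ≤ 0 := by
  by_contra hpos
  push Not at hpos
  have key : ∀ k : ℕ, ∀ u, (A / B) ^ k * Q u ≤ n u := by
    intro k
    induction k with
    | zero => intro u; simpa using h0 u
    | succ k ih =>
      intro u
      have h1 := ih (f u)
      have h2 := hQ u
      have h3 := hn u
      have hp : 0 ≤ (A / B) ^ k := by positivity [hB.trans hAB]
      have h4 : (A / B) ^ k * (A * Q u) ≤ B * n u :=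
        (mul_le_mul_of_nonneg_left h2 hp).trans (h1.trans h3)
      have h5 : (A / B) ^ (k + 1) * Q u = ((A / B) ^ k * (A * Q u)) / B := by
        rw [pow_succ]; ring
      rw [h5, div_le_iff₀ hB]
      linarith
  have h1 : 1 < A / B := by rwa [one_lt_div hB]
  obtain ⟨k, hk⟩ := pow_unbounded_of_one_lt (n u / Q u) h1
  have := key k u
  rw [div_lt_iff₀ hpos] at hk
  linarith

section core
variable {ι : Type*} [Fintype ι]

/-- linear map part -/
noncomputable def Lin (P : ι → ι → ℝ) (q : ι → ℝ) (v : ι → ℝ) (s : ℝ) (a : ι) : ℝ := ∑ b, P a b * v b + s * q a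

/-- quadratic form -/
noncomputable def Quad (P : ι → ι → ℝ) (q : ι → ℝ) (r : ℝ) (v : ι → ℝ) (s : ℝ) : ℝ :=
  ∑ a, ∑ b, P a b * v a * v b + 2 * s * ∑ a, q a * v a + s ^ 2 * r

lemma Quad_add (P : ι → ι → ℝ) (q : ι → ℝ) (r : ℝ) (hsym : ∀ a b, P a b = P b a)
    (v g : ι → ℝ) (s t : ℝ) :
    Quad P q r (fun a => v a + t * g a) s =
      Quad P q r v s + 2 * t * ∑ a, Lin P q v s a * g a + t ^ 2 * ∑ a, ∑ b, P a b * g a * g b := by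
  have h1 : ∑ a, ∑ b, P a b * v a * g b = ∑ a, ∑ b, P a b * g a * v b := by
    rw [Finset.sum_comm]
    refine Finset.sum_congr rfl fun a _ => Finset.sum_congr rfl fun b _ => ?_
    rw [hsym]; ring
  have h2 : ∑ a, Lin P q v s a * g a
      = ∑ a, ∑ b, P a b * g a * v b + s * ∑ a, q a * g a := by
    unfold Lin
    rw [Finset.mul_sum, ← Finset.sum_add_distrib]
    refine Finset.sum_congr rfl fun a _ => ?_
    rw [add_mul, Finset.sum_mul]
    congr 1
    · exact Finset.sum_congr rfl fun b _ => by ring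
    · ring
  rw [h2]
  unfold Quad
  have h3 : ∑ a, ∑ b, P a b * (v a + t * g a) * (v b + t * g b)
      = ∑ a, ∑ b, P a b * v a * v b + t * ∑ a, ∑ b, P a b * v a * g b
        + t * ∑ a, ∑ b, P a b * g a * v b + t ^ 2 * ∑ a, ∑ b, P a b * g a * g b := by
    simp only [Finset.mul_sum, ← Finset.sum_add_distrib]
    refine Finset.sum_congr rfl fun a _ => Finset.sum_congr rfl fun b _ => ?_
    ring
  have h4 : ∑ a, q a * (v a + t * g a) = ∑ a, q a * v a + t * ∑ a, q a * g a := by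
    simp only [Finset.mul_sum, ← Finset.sum_add_distrib]
    refine Finset.sum_congr rfl fun a _ => ?_
    ring
  rw [h3, h4, h1]
  ring

lemma sum_sq_expand (P : ι → ι → ℝ) (D : ι → ℝ) (hD : ∀ a, D a = ∑ b, P a b)
    (hsym : ∀ a b, P a b = P b a) (g : ι → ℝ) (e : ℝ) (he : e ^ 2 = 1) :
    ∑ a, ∑ b, P a b * (g a + e * g b) ^ 2 =
      2 * ∑ a, D a * g a ^ 2 + 2 * e * ∑ a, ∑ b, P a b * g a * g b := by
  have h1 : ∑ a, ∑ b, P a b * g a ^ 2 = ∑ a, D a * g a ^ 2 :=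
    Finset.sum_congr rfl fun a _ => by rw [hD, Finset.sum_mul]
  have h2 : ∑ a, ∑ b, P a b * g b ^ 2 = ∑ a, D a * g a ^ 2 := by
    rw [Finset.sum_comm, ← h1]
    exact Finset.sum_congr rfl fun a _ => Finset.sum_congr rfl fun b _ => by rw [hsym]
  have h3 : ∑ a, ∑ b, P a b * (g a + e * g b) ^ 2 = ∑ a, ∑ b, P a b * g a ^ 2
      + 2 * e * ∑ a, ∑ b, P a b * g a * g b + e ^ 2 * ∑ a, ∑ b, P a b * g b ^ 2 := by
    simp only [Finset.mul_sum, ← Finset.sum_add_distrib]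
    refine Finset.sum_congr rfl fun a _ => Finset.sum_congr rfl fun b _ => ?_
    ring
  rw [h3, he, h1, h2]; ring

lemma poincare (P : ι → ι → ℝ) (D : ι → ℝ) (hD : ∀ a, D a = ∑ b, P a b)
    (hsym : ∀ a b, P a b = P b a) (hnn : ∀ a b, 0 ≤ P a b)
    (hW : 0 < ∑ a, D a)
    (hconn : ∀ a b, D a ≠ 0 → D b ≠ 0 → 1 ≤ P a b ∨ ∃ c, 1 ≤ P a c ∧ 1 ≤ P c b)
    (g : ι → ℝ) (hg : ∑ a, D a * g a = 0) :
    ∑ a, ∑ b, P a b * g a * g b ≤ (1 - 1 / (4 * ∑ a, D a)) * ∑ a, D a * g a ^ 2 := by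
  set W := ∑ a, D a with hWd
  have hDnn : ∀ a, 0 ≤ D a := fun a => by rw [hD]; exact Finset.sum_nonneg fun b _ => hnn a b
  have hE := sum_sq_expand P D hD hsym g (-1) (by norm_num)
  set E := ∑ a, ∑ b, P a b * (g a + -1 * g b) ^ 2 with hEd
  have hterm : ∀ a b, 0 ≤ P a b * (g a + -1 * g b) ^ 2 := fun a b =>
    mul_nonneg (hnn a b) (sq_nonneg _)
  have hE0 : 0 ≤ E := Finset.sum_nonneg fun a _ => Finset.sum_nonneg fun b _ => hterm a b
  have hone : ∀ a b, 1 ≤ P a b → (g a - g b) ^ 2 ≤ E := by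
    intro a b h
    have h1 : P a b * (g a + -1 * g b) ^ 2 ≤ ∑ b, P a b * (g a + -1 * g b) ^ 2 :=
      Finset.single_le_sum (f := fun b => P a b * (g a + -1 * g b) ^ 2)
        (fun b _ => hterm a b) (Finset.mem_univ b)
    have h2 : ∑ b, P a b * (g a + -1 * g b) ^ 2 ≤ E :=
      Finset.single_le_sum (f := fun a => ∑ b, P a b * (g a + -1 * g b) ^ 2)
        (fun a _ => Finset.sum_nonneg fun b _ => hterm a b) (Finset.mem_univ a)
    have h3 : (g a - g b) ^ 2 ≤ P a b * (g a + -1 * g b) ^ 2 := by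
      nlinarith [sq_nonneg (g a - g b)]
    linarith
  have htwo : ∀ a b, D a * D b * (g a - g b) ^ 2 ≤ D a * D b * (4 * E) := by
    intro a b
    by_cases ha : D a = 0
    · simp [ha]
    by_cases hb : D b = 0
    · simp [hb]
    refine mul_le_mul_of_nonneg_left ?_ (mul_nonneg (hDnn a) (hDnn b))
    rcases hconn a b ha hb with h | ⟨c, h1, h2⟩
    · linarith [hone a b h]
    · have := hone a c h1
      have := hone c b h2
      nlinarith [sq_nonneg (g a - g c - (g c - g b))]
  have hsum : ∑ a, ∑ b, D a * D b * (g a - g b) ^ 2 ≤ ∑ a, ∑ b, D a * D b * (4 * E) :=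
    Finset.sum_le_sum fun a _ => Finset.sum_le_sum fun b _ => htwo a b
  have hR : ∑ a, ∑ b, D a * D b * (4 * E) = W ^ 2 * (4 * E) := by
    simp only [← Finset.sum_mul, ← Finset.mul_sum]
    rw [sq]
  have hL : ∑ a, ∑ b, D a * D b * (g a - g b) ^ 2 = 2 * W * ∑ a, D a * g a ^ 2 := by
    have : ∑ a, ∑ b, D a * D b * (g a - g b) ^ 2 =
        (∑ a, D a * g a ^ 2) * (∑ b, D b) - 2 * ((∑ a, D a * g a) * (∑ b, D b * g b))
         + (∑ a, D a) * (∑ b, D b * g b ^ 2) := by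
      rw [Finset.sum_mul_sum, Finset.sum_mul_sum, Finset.sum_mul_sum]
      simp only [Finset.mul_sum, ← Finset.sum_add_distrib, ← Finset.sum_sub_distrib]
      refine Finset.sum_congr rfl fun a _ => Finset.sum_congr rfl fun b _ => ?_
      ring
    rw [this, hg, ← hWd]; ring
  rw [hL, hR, hE] at hsum
  set X := ∑ a, D a * g a ^ 2
  set Y := ∑ a, ∑ b, P a b * g a * g b
  have h5 : W * X ≤ W * (4 * W * (X - Y)) := by nlinarith
  have h6 : X ≤ 4 * W * (X - Y) := le_of_mul_le_mul_left h5 hW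
  have h7 : X / (4 * W) ≤ X - Y := by
    rw [div_le_iff₀ (by positivity)]; linarith
  have : (1 - 1 / (4 * W)) * X = X - X / (4 * W) := by ring
  rw [this]; linarith

lemma core (P : ι → ι → ℝ) (q : ι → ℝ) (r : ℝ) (D : ι → ℝ) (hD : ∀ a, D a = ∑ b, P a b)
    (hsym : ∀ a b, P a b = P b a) (hnn : ∀ a b, 0 ≤ P a b)
    (hq0 : ∀ a, D a = 0 → q a = 0)
    (hW : 0 < ∑ a, D a)
    (hconn : ∀ a b, D a ≠ 0 → D b ≠ 0 → 1 ≤ P a b ∨ ∃ c, 1 ≤ P a c ∧ 1 ≤ P c b)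
    (star : ∀ v s, Quad P q r v s ≤ ∑ a, D a * (Lin P q v s a / D a) ^ 2)
    (v : ι → ℝ) (s : ℝ) (hv : ∑ a, Lin P q v s a = 0) :
    Quad P q r v s ≤ 0 ∧ (Quad P q r v s = 0 → ∀ a, Lin P q v s a = 0) := by
  have hDnn : ∀ a, 0 ≤ D a := fun a => by rw [hD]; exact Finset.sum_nonneg fun b _ => hnn a b
  have hP0 : ∀ a, D a = 0 → ∀ b, P a b = 0 := by
    intro a ha b
    rw [hD, Finset.sum_eq_zero_iff_of_nonneg (fun b _ => hnn a b)] at ha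
    exact ha b (Finset.mem_univ b)
  have hDL : ∀ v s a, D a * (Lin P q v s a / D a) = Lin P q v s a := by
    intro v s a
    by_cases ha : D a = 0
    · have : Lin P q v s a = 0 := by
        unfold Lin; simp [hP0 a ha, hq0 a ha]
      rw [this]; simp
    · field_simp
  set W := ∑ a, D a with hWd
  -- choose step
  set δ := 1 / (4 * W) with hδ
  have hδ0 : 0 < δ := by positivity
  obtain ⟨t, ht0, htδ, ht1, ht2⟩ : ∃ t : ℝ, 0 < t ∧ t < δ ∧ t ≤ 1 ∧ t * δ ≤ 1 / 2 := by
    refine ⟨min (δ / 2) (min 1 (1 / (2 * δ))), by positivity, ?_, ?_, ?_⟩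
    · exact (min_le_left _ _).trans_lt (by linarith)
    · exact (min_le_right _ _).trans (min_le_left _ _)
    · have h : min (δ / 2) (min 1 (1 / (2 * δ))) ≤ 1 / (2 * δ) :=
        (min_le_right _ _).trans (min_le_right _ _)
      have := mul_le_mul_of_nonneg_right h hδ0.le
      refine this.trans (le_of_eq ?_)
      field_simp
  let g : (ι → ℝ) → ℝ → ι → ℝ := fun v s a => Lin P q v s a / D a
  have hg : ∀ v s a, D a * g v s a = Lin P q v s a := hDL
  let N : (ι → ℝ) → ℝ → ℝ := fun v s => ∑ a, D a * (g v s a) ^ 2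
  have hNnn : ∀ v s, 0 ≤ N v s := fun v s => Finset.sum_nonneg fun a _ =>
    mul_nonneg (hDnn a) (sq_nonneg _)
  have hlow : ∀ x : ι → ℝ, -∑ a, D a * x a ^ 2 ≤ ∑ a, ∑ b, P a b * x a * x b := by
    intro x
    have h := sum_sq_expand P D hD hsym x 1 (by norm_num)
    have h0 : 0 ≤ ∑ a, ∑ b, P a b * (x a + 1 * x b) ^ 2 := Finset.sum_nonneg fun a _ =>
      Finset.sum_nonneg fun b _ => mul_nonneg (hnn a b) (sq_nonneg _)
    linarith
  have hLinAdd : ∀ (v : ι → ℝ) (s : ℝ) (x : ι → ℝ) (a : ι), Lin P q (fun a => v a + t * x a) s a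
      = Lin P q v s a + t * ∑ b, P a b * x b := by
    intro v s x a
    unfold Lin
    simp only [mul_add, Finset.sum_add_distrib, Finset.mul_sum]
    have : ∑ b, P a b * (t * x b) = ∑ b, t * (P a b * x b) :=
      Finset.sum_congr rfl fun b _ => by ring
    rw [this]; ring
  have hPsum : ∀ x : ι → ℝ, ∑ a, ∑ b, P a b * x b = ∑ a, D a * x a := by
    intro x
    rw [Finset.sum_comm]
    refine Finset.sum_congr rfl fun a _ => ?_
    rw [hD, Finset.sum_mul]
    exact Finset.sum_congr rfl fun b _ => by rw [hsym]
  -- step estimates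
  have hQstep : ∀ v s, Quad P q r v s + (2 * t - t ^ 2) * N v s
      ≤ Quad P q r (fun a => v a + t * g v s a) s := by
    intro v s
    rw [Quad_add P q r hsym]
    have h1 : ∑ a, Lin P q v s a * g v s a = N v s :=
      Finset.sum_congr rfl fun a _ => by rw [← hg]; ring
    rw [h1]
    have h2 := hlow (g v s)
    change -N v s ≤ _ at h2
    nlinarith [sq_nonneg t]
  have hNstep : ∀ v s, ∑ a, Lin P q v s a = 0 →
      N (fun a => v a + t * g v s a) s ≤ (1 + 2 * t * (1 - δ) + t ^ 2) * N v s := by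
    intro v s hv
    have hgs : ∑ a, D a * g v s a = 0 := by simpa only [hg] using hv
    have hp := poincare P D hD hsym hnn hW hconn (g v s) hgs
    change _ ≤ (1 - δ) * N v s at hp
    have hA : ∀ a, D a * (g (fun a => v a + t * g v s a) s a) ^ 2 ≤
        D a * g v s a ^ 2 + 2 * t * (∑ b, P a b * g v s a * g v s b)
         + t ^ 2 * ∑ b, P a b * g v s b ^ 2 := by
      intro a
      by_cases ha : D a = 0
      · simp [ha, hP0 a ha]
      have hap : 0 < D a := lt_of_le_of_ne (hDnn a) (Ne.symm ha)
      have h1 : g (fun a => v a + t * g v s a) s a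
          = g v s a + t * (∑ b, P a b * g v s b) / D a := by
        change Lin P q _ s a / D a = Lin P q v s a / D a + _
        rw [hLinAdd]; ring
      have hcs : (∑ b, P a b * g v s b) ^ 2 ≤ D a * ∑ b, P a b * g v s b ^ 2 := by
        rw [hD]
        refine Finset.sum_sq_le_sum_mul_sum_of_sq_le_mul _ (fun b _ => hnn a b)
          (fun b _ => mul_nonneg (hnn a b) (sq_nonneg _)) (fun b _ => le_of_eq (by ring))
      have h2 : ∑ b, P a b * g v s a * g v s b = g v s a * ∑ b, P a b * g v s b := by
        rw [Finset.mul_sum]; exact Finset.sum_congr rfl fun b _ => by ring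
      rw [h1, h2]
      set Z := ∑ b, P a b * g v s b
      set Y := ∑ b, P a b * g v s b ^ 2
      have h3 : D a * (g v s a + t * Z / D a) ^ 2
          = D a * g v s a ^ 2 + 2 * t * (g v s a * Z) + t ^ 2 * (Z ^ 2 / D a) := by
        field_simp
        ring
      rw [h3]
      have h4 : Z ^ 2 / D a ≤ Y := by rw [div_le_iff₀ hap]; linarith
      have := mul_le_mul_of_nonneg_left h4 (sq_nonneg t)
      linarith
    have hS := Finset.sum_le_sum fun a (_ : a ∈ Finset.univ) => hA a
    rw [Finset.sum_add_distrib, Finset.sum_add_distrib, ← Finset.mul_sum, ← Finset.mul_sum,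
      hPsum (fun b => g v s b ^ 2)] at hS
    change N _ s ≤ N v s + 2 * t * _ + t ^ 2 * N v s at hS
    nlinarith
  have hLstep : ∀ v s, ∑ a, Lin P q v s a = 0 →
      ∑ a, Lin P q (fun a => v a + t * g v s a) s a = 0 := by
    intro v s hv
    have hgs : ∑ a, D a * g v s a = 0 := by simpa only [hg] using hv
    simp only [hLinAdd, Finset.sum_add_distrib, ← Finset.mul_sum]
    rw [hPsum, hgs, hv]; ring
  have main : ∀ v s, ∑ a, Lin P q v s a = 0 → Quad P q r v s ≤ 0 := by
    intro v s hv
    let α := {p : (ι → ℝ) × ℝ // ∑ a, Lin P q p.1 p.2 a = 0}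
    refine growth_contra (α := α) (fun p => Quad P q r p.1.1 p.1.2) (fun p => N p.1.1 p.1.2)
      (fun p => ⟨(fun a => p.1.1 a + t * g p.1.1 p.1.2 a, p.1.2), hLstep _ _ p.2⟩)
      (1 + 2 * t - t ^ 2) (1 + 2 * t * (1 - δ) + t ^ 2) ?_ ?_ ?_ ?_ ?_ ⟨(v, s), hv⟩
    · nlinarith
    · nlinarith
    · rintro ⟨⟨v, s⟩, h⟩; exact star v s
    · rintro ⟨⟨v, s⟩, h⟩
      have h1 := hQstep v s
      have h2 := star v s
      change _ ≤ N v s at h2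
      have : 0 ≤ 2 * t - t ^ 2 := by nlinarith
      have := mul_le_mul_of_nonneg_left h2 this
      dsimp only
      nlinarith
    · rintro ⟨⟨v, s⟩, h⟩; exact hNstep v s h
  refine ⟨main v s hv, fun h0 a => ?_⟩
  have h1 := hQstep v s
  have h2 := main _ s (hLstep v s hv)
  have h3 := hNnn v s
  have h4 : N v s = 0 := by
    have : 0 < 2 * t - t ^ 2 := by nlinarith
    nlinarith
  have h5 := (Finset.sum_eq_zero_iff_of_nonneg (fun a _ =>
    mul_nonneg (hDnn a) (sq_nonneg _))).1 h4 a (Finset.mem_univ a)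
  rw [← hg]
  rcases mul_eq_zero.1 h5 with h | h
  · rw [h, zero_mul]
  · rw [pow_eq_zero_iff (two_ne_zero)] at h
    rw [h, mul_zero]



/-- reverse Cauchy-Schwarz property -/
def Hyp (P : ι → ι → ℝ) (q : ι → ℝ) (r : ℝ) : Prop :=
  ∀ v s, (∑ a, ∑ b, P a b) * Quad P q r v s ≤ (∑ a, Lin P q v s a) ^ 2

lemma Lin_shift (P : ι → ι → ℝ) (q : ι → ℝ) (v : ι → ℝ) (s t : ℝ) :
    ∑ a, Lin P q (fun a => v a + t * 1) s a = ∑ a, Lin P q v s a + t * ∑ a, ∑ b, P a b := by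
  unfold Lin
  rw [Finset.mul_sum, ← Finset.sum_add_distrib]
  refine Finset.sum_congr rfl fun a _ => ?_
  rw [Finset.mul_sum]
  simp only [mul_add, Finset.sum_add_distrib]
  have : ∑ b, P a b * (t * 1) = ∑ b, t * P a b := Finset.sum_congr rfl fun b _ => by ring
  rw [this]; ring

lemma Quad_shift (P : ι → ι → ℝ) (q : ι → ℝ) (r : ℝ) (hsym : ∀ a b, P a b = P b a)
    (v : ι → ℝ) (s t : ℝ) :
    Quad P q r (fun a => v a + t * 1) s = Quad P q r v s + 2 * t * ∑ a, Lin P q v s a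
      + t ^ 2 * ∑ a, ∑ b, P a b := by
  have := Quad_add P q r hsym v (fun _ => 1) s t
  simpa using this

lemma Hyp_of_zero (P : ι → ι → ℝ) (q : ι → ℝ) (r : ℝ) (hsym : ∀ a b, P a b = P b a)
    (hW : 0 < ∑ a, ∑ b, P a b)
    (h : ∀ v s, ∑ a, Lin P q v s a = 0 → Quad P q r v s ≤ 0) : Hyp P q r := by
  intro v s
  set W := ∑ a, ∑ b, P a b with hWd
  set L := ∑ a, Lin P q v s a with hL
  have h1 := Lin_shift P q v s (-L / W)
  have h2 := Quad_shift P q r hsym v s (-L / W)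
  rw [← hWd, ← hL] at h1 h2
  have h3 : L + -L / W * W = 0 := by field_simp; ring
  have h4 := h _ s (h1.trans h3)
  rw [h2] at h4
  have h5 : W * (Quad P q r v s + 2 * (-L / W) * L + (-L / W) ^ 2 * W)
      = W * Quad P q r v s - L ^ 2 := by
    field_simp; ring
  have h6 := mul_nonpos_of_nonneg_of_nonpos hW.le h4
  linarith

lemma Quad_zero_one (P : ι → ι → ℝ) (q : ι → ℝ) (r : ℝ) : Quad P q r (fun _ => 0) 1 = r := by
  simp [Quad]

lemma Lin_zero_one (P : ι → ι → ℝ) (q : ι → ℝ) (a : ι) : Lin P q (fun _ => 0) 1 a = q a := by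
  simp [Lin]

lemma trickle (P : ι → ι → ℝ) (q : ι → ℝ) (r : ℝ)
    (Pf : ι → ι → ι → ℝ) (qf : ι → ι → ℝ) (rf : ι → ℝ) (m : ℝ) (hm : 0 < m)
    (hsym : ∀ a b, P a b = P b a) (hnn : ∀ a b, 0 ≤ P a b)
    (hsymf : ∀ x a b, Pf x a b = Pf x b a)
    (h1 : ∀ b c, ∑ a, Pf a b c = m * P b c) (h2 : ∀ b, ∑ a, qf a b = m * q b)
    (h3 : ∑ a, rf a = m * r)
    (h4 : ∀ a c, ∑ b, Pf a b c = m * P a c) (h5 : ∀ a, ∑ b, qf a b = m * q a)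
    (hyp : ∀ a, Hyp (Pf a) (qf a) (rf a))
    (hz : ∀ a, ∑ b, P a b = 0 → q a = 0 ∧ ∀ v s, Quad (Pf a) (qf a) (rf a) v s = 0)
    (hW : 0 < ∑ a, ∑ b, P a b)
    (hconn : ∀ a b, ∑ c, P a c ≠ 0 → ∑ c, P b c ≠ 0 →
      1 ≤ P a b ∨ ∃ c, 1 ≤ P a c ∧ 1 ≤ P c b) :
    Hyp P q r ∧ ((∑ a, ∑ b, P a b) * r = (∑ a, q a) ^ 2 →
      ∀ a, (∑ b, ∑ c, Pf a b c) * rf a = (∑ b, qf a b) ^ 2) := by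
  have hDnn : ∀ a, 0 ≤ ∑ b, P a b := fun a => Finset.sum_nonneg fun b _ => hnn a b
  have hLf : ∀ a v s, ∑ b, Lin (Pf a) (qf a) v s b = m * Lin P q v s a := by
    intro a v s
    unfold Lin
    rw [Finset.sum_add_distrib, Finset.sum_comm, ← Finset.mul_sum, h5, mul_add, Finset.mul_sum]
    simp only [← Finset.sum_mul, h4]
    congr 1
    · exact Finset.sum_congr rfl fun b _ => by ring
    · ring
  have hWf : ∀ a, ∑ b, ∑ c, Pf a b c = m * ∑ c, P a c := by
    intro a
    rw [Finset.sum_comm, Finset.mul_sum]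
    exact Finset.sum_congr rfl fun c _ => h4 a c
  have hQf : ∀ v s, ∑ a, Quad (Pf a) (qf a) (rf a) v s = m * Quad P q r v s := by
    intro v s
    unfold Quad
    rw [Finset.sum_add_distrib, Finset.sum_add_distrib, ← Finset.mul_sum, ← Finset.mul_sum, h3]
    have e1 : ∑ a, ∑ b, ∑ c, Pf a b c * v b * v c = m * ∑ b, ∑ c, P b c * v b * v c := by
      rw [Finset.sum_comm, Finset.mul_sum]
      refine Finset.sum_congr rfl fun b _ => ?_
      rw [Finset.sum_comm, Finset.mul_sum]
      refine Finset.sum_congr rfl fun c _ => ?_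
      simp only [← Finset.sum_mul, h1]; ring
    have e2 : ∑ a, ∑ b, qf a b * v b = m * ∑ b, q b * v b := by
      rw [Finset.sum_comm, Finset.mul_sum]
      refine Finset.sum_congr rfl fun b _ => ?_
      simp only [← Finset.sum_mul, h2]; ring
    rw [e1, e2]; ring
  have hloc : ∀ a v s, Quad (Pf a) (qf a) (rf a) v s ≤
      m * ((∑ b, P a b) * (Lin P q v s a / ∑ b, P a b) ^ 2) := by
    intro a v s
    by_cases ha : ∑ b, P a b = 0
    · rw [(hz a ha).2, ha]; simp
    have hap : 0 < ∑ b, P a b := lt_of_le_of_ne (hDnn a) (Ne.symm ha)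
    have h := hyp a v s
    rw [hLf, hWf] at h
    set D := ∑ b, P a b
    have e : m * (D * (Lin P q v s a / D) ^ 2) = (m * Lin P q v s a) ^ 2 / (m * D) := by
      field_simp
    rw [e, le_div_iff₀ (by positivity)]
    linarith
  have star : ∀ v s, Quad P q r v s ≤ ∑ a, (∑ b, P a b) * (Lin P q v s a / ∑ b, P a b) ^ 2 := by
    intro v s
    have h := Finset.sum_le_sum fun a (_ : a ∈ Finset.univ) => hloc a v s
    rw [hQf, ← Finset.mul_sum] at h
    exact le_of_mul_le_mul_left h hm
  have hcore := core P q r (fun a => ∑ b, P a b) (fun a => rfl) hsym hnn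
    (fun a h => (hz a h).1) hW hconn star
  refine ⟨Hyp_of_zero P q r hsym hW fun v s h => (hcore v s h).1, fun heq a => ?_⟩
  set W := ∑ a, ∑ b, P a b with hWd
  set L := ∑ a, q a with hL
  set t := -L / W with ht
  have htW : L + t * W = 0 := by rw [ht]; field_simp; ring
  have e1 := Lin_shift P q (fun _ => 0) 1 t
  have e2 := Quad_shift P q r hsym (fun _ => 0) 1 t
  simp only [Quad_zero_one, Lin_zero_one] at e1 e2
  rw [← hWd, ← hL] at e1 e2
  have e3 : r + 2 * t * L + t ^ 2 * W = 0 := by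
    have hL' : L = -(t * W) := by linarith
    have : W * (r + 2 * t * L + t ^ 2 * W) = 0 := by
      have : W * (r + 2 * t * L + t ^ 2 * W) = W * r + 2 * (t * W) * L + (t * W) ^ 2 := by ring
      rw [this, heq, hL']; ring
    exact (mul_eq_zero.1 this).resolve_left hW.ne'
  have hLin0 := (hcore _ 1 (e1.trans htW)).2 (e2.trans e3)
  have hQle : ∀ x, Quad (Pf x) (qf x) (rf x) (fun _ => 0 + t * 1) 1 ≤ 0 := by
    intro x
    have := hloc x (fun _ => 0 + t * 1) 1
    rw [hLin0] at this
    simpa using this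
  have hQ0 : ∀ x, Quad (Pf x) (qf x) (rf x) (fun _ => 0 + t * 1) 1 = 0 := by
    have := hQf (fun _ => 0 + t * 1) 1
    rw [e2, e3, mul_zero, Finset.sum_eq_zero_iff_of_nonpos (fun x _ => hQle x)] at this
    exact fun x => this x (Finset.mem_univ x)
  have f1 := Lin_shift (Pf a) (qf a) (fun _ => 0) 1 t
  have f2 := Quad_shift (Pf a) (qf a) (rf a) (hsymf a) (fun _ => 0) 1 t
  rw [hLf, hLin0, mul_zero] at f1
  rw [hQ0] at f2
  simp only [Quad_zero_one, Lin_zero_one] at f1 f2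
  set Wa := ∑ b, ∑ c, Pf a b c
  set La := ∑ b, qf a b
  have hLa : La = -(t * Wa) := by linarith
  rw [hLa] at f2 ⊢
  have : rf a = t ^ 2 * Wa := by linarith
  rw [this]; ring

/-- The base inequality for `p` classes. -/
lemma base_ineq {κ : Type*} (T : Finset κ) (n z : κ → ℝ) (hp : 2 ≤ T.card)
    (hn : ∀ k ∈ T, 0 ≤ n k) (hpos : 0 < ∑ k ∈ T, n k) (x : ℝ)
    (hx : (∑ k ∈ T, n k) * x = ∑ k ∈ T, n k * z k) :
    x ^ 2 + (x - ∑ k ∈ T, z k) ^ 2 / ((T.card : ℝ) - 1) ≤ ∑ k ∈ T, z k ^ 2 := by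
  set σ := ∑ k ∈ T, z k with hσ
  set N := ∑ k ∈ T, n k with hN
  set Z := ∑ k ∈ T, z k ^ 2 with hZ
  have hp1 : (0 : ℝ) < (T.card : ℝ) - 1 := by
    have : (2 : ℝ) ≤ T.card := by exact_mod_cast hp
    linarith
  have h1 : ∀ j ∈ T, z j ^ 2 + (z j - σ) ^ 2 / ((T.card : ℝ) - 1) ≤ Z := by
    intro j hj
    have e1 : σ = ∑ k ∈ T.erase j, z k + z j := (Finset.sum_erase_add T z hj).symm
    have e2 : Z = ∑ k ∈ T.erase j, z k ^ 2 + z j ^ 2 :=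
      (Finset.sum_erase_add T (fun k => z k ^ 2) hj).symm
    have cs := sq_sum_le_card_mul_sum_sq (s := T.erase j) (f := z)
    have hc : ((T.erase j).card : ℝ) = (T.card : ℝ) - 1 := by
      rw [Finset.card_erase_of_mem hj, Nat.cast_sub (by omega)]; simp
    rw [hc] at cs
    have : (z j - σ) ^ 2 / ((T.card : ℝ) - 1) ≤ ∑ k ∈ T.erase j, z k ^ 2 := by
      rw [div_le_iff₀ hp1, e1]
      nlinarith
    linarith
  set u := 1 / ((T.card : ℝ) - 1) with hu
  have hu0 : 0 < u := by positivity
  have hdiv : ∀ y : ℝ, y / ((T.card : ℝ) - 1) = u * y := fun y => by rw [hu]; ring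
  simp only [hdiv] at h1 ⊢
  have h2 : ∀ j ∈ T, n j * (x ^ 2 + u * (x - σ) ^ 2) +
      (2 * x + 2 * u * (x - σ)) * (n j * z j - n j * x) ≤ n j * Z := by
    intro j hj
    have := mul_le_mul_of_nonneg_left (h1 j hj) (hn j hj)
    have h3 : 0 ≤ n j * ((1 + u) * (z j - x) ^ 2) :=
      mul_nonneg (hn j hj) (by positivity)
    nlinarith
  have h3 := Finset.sum_le_sum h2
  rw [Finset.sum_add_distrib, ← Finset.sum_mul, ← Finset.sum_mul, ← Finset.mul_sum,
    Finset.sum_sub_distrib, ← Finset.sum_mul, ← hN, ← hx] at h3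
  have h4 : N * (x ^ 2 + u * (x - σ) ^ 2) ≤ N * Z := by linarith
  exact le_of_mul_le_mul_left h4 hpos

lemma base_hyp {κ : Type*} [DecidableEq κ] (X : ι → Prop) (f : ι → κ) (T : Finset κ)
    (hT : ∀ a, X a → f a ∈ T) (hp : 2 ≤ T.card)
    (P : ι → ι → ℝ) (q : ι → ℝ) (r : ℝ)
    (hP : ∀ a b, P a b = if X a ∧ X b ∧ f a ≠ f b then 1 else 0)
    (hq : ∀ a, q a = if X a then 1 else 0) (hr : r = 1 + 1 / ((T.card : ℝ) - 1)) :
    Hyp P q r ∧ ((∑ a, ∑ b, P a b) * r = (∑ a, q a) ^ 2 → ∀ k ∈ T, ∀ l ∈ T,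
      (Finset.univ.filter fun a => X a ∧ f a = k).card =
      (Finset.univ.filter fun a => X a ∧ f a = l).card) := by
  let χ : κ → ι → ℝ := fun k a => if X a ∧ f a = k then 1 else 0
  have hqχ : ∀ a, q a = ∑ k ∈ T, χ k a := by
    intro a
    rw [hq]
    by_cases ha : X a
    · simp [χ, ha, hT a ha]
    · simp [χ, ha]
  have hPχ : ∀ a b, P a b = q a * q b - ∑ k ∈ T, χ k a * χ k b := by
    intro a b
    rw [hP, hq, hq]
    by_cases ha : X a <;> by_cases hb : X b <;> simp [χ, ha, hb]
    by_cases hab : f a = f b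
    · simp [hab, hT b hb]
    · simp [hab]
  have bil : ∀ x y : ι → ℝ, ∑ a, ∑ b, P a b * x a * y b =
      (∑ a, q a * x a) * (∑ b, q b * y b)
        - ∑ k ∈ T, (∑ a, χ k a * x a) * (∑ b, χ k b * y b) := by
    intro x y
    simp only [Finset.sum_mul_sum]
    rw [Finset.sum_comm (s := T), ← Finset.sum_sub_distrib]
    refine Finset.sum_congr rfl fun a _ => ?_
    rw [Finset.sum_comm (s := T), ← Finset.sum_sub_distrib]
    refine Finset.sum_congr rfl fun b _ => ?_
    rw [hPχ, sub_mul, sub_mul, Finset.sum_mul, Finset.sum_mul]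
    congr 1
    · ring
    · exact Finset.sum_congr rfl fun k _ => by ring
  have qs : ∀ x : ι → ℝ, ∑ a, q a * x a = ∑ k ∈ T, ∑ a, χ k a * x a := by
    intro x
    rw [Finset.sum_comm]
    exact Finset.sum_congr rfl fun a _ => by rw [hqχ, Finset.sum_mul]
  have hsym : ∀ a b, P a b = P b a := by
    intro a b
    rw [hP, hP]
    congr 1
    exact propext ⟨fun h => ⟨h.2.1, h.1, h.2.2.symm⟩, fun h => ⟨h.2.1, h.1, h.2.2.symm⟩⟩
  have hnn : ∀ a b, 0 ≤ P a b := by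
    intro a b; rw [hP]; split_ifs <;> norm_num
  have hp1 : (0 : ℝ) < (T.card : ℝ) - 1 := by
    have : (2 : ℝ) ≤ T.card := by exact_mod_cast hp
    linarith
  let n : κ → ℝ := fun k => ∑ a, χ k a
  have hn0 : ∀ k, 0 ≤ n k := fun k => Finset.sum_nonneg fun a _ => by
    simp only [χ]; split_ifs <;> norm_num
  have hqn : ∑ a, q a = ∑ k ∈ T, n k := by
    have := qs (fun _ => 1); simpa using this
  have hWn : ∑ a, ∑ b, P a b = (∑ k ∈ T, n k) ^ 2 - ∑ k ∈ T, n k ^ 2 := by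
    have := bil (fun _ => 1) (fun _ => 1)
    simp only [mul_one] at this
    rw [this, hqn]
    simp only [sq, n]
  constructor
  · rcases (Finset.sum_nonneg fun a (_ : a ∈ Finset.univ) =>
      Finset.sum_nonneg fun b (_ : b ∈ Finset.univ) => hnn a b).eq_or_lt with h0 | hW
    · intro v s; rw [← h0]; simp only [zero_mul]; positivity
    refine Hyp_of_zero P q r hsym hW fun v s hL => ?_
    have hN : 0 < ∑ k ∈ T, n k := by
      rcases (Finset.sum_nonneg fun k (_ : k ∈ T) => hn0 k).eq_or_lt with h | h
      · rw [hWn, ← h] at hW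
        have : 0 ≤ ∑ k ∈ T, n k ^ 2 := Finset.sum_nonneg fun k _ => sq_nonneg _
        linarith
      · exact h
    let z : κ → ℝ := fun k => ∑ a, χ k a * v a
    have hL' : (∑ k ∈ T, n k) * (∑ k ∈ T, z k + s) = ∑ k ∈ T, n k * z k := by
      have e := bil (fun _ => 1) v
      simp only [mul_one] at e
      have : ∑ a, Lin P q v s a = ∑ a, ∑ b, P a b * v b + s * ∑ a, q a := by
        unfold Lin; rw [Finset.sum_add_distrib, Finset.mul_sum]
      rw [this, e, hqn, qs] at hL
      change (∑ k ∈ T, n k) * (∑ k ∈ T, z k) - ∑ k ∈ T, n k * z k + s * ∑ k ∈ T, n k = 0 at hL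
      linarith
    have := base_ineq T n z hp (fun k _ => hn0 k) hN _ hL'
    have hQ : Quad P q r v s = (∑ k ∈ T, z k) ^ 2 - ∑ k ∈ T, z k ^ 2 + 2 * s * ∑ k ∈ T, z k
        + s ^ 2 * r := by
      unfold Quad
      rw [bil, qs]
      simp only [sq, z]
    rw [hQ, hr]
    have e : (∑ k ∈ T, z k + s - ∑ k ∈ T, z k) ^ 2 / ((T.card : ℝ) - 1)
        = s ^ 2 * (1 / ((T.card : ℝ) - 1)) := by ring
    rw [e] at this
    nlinarith
  · intro heq
    rw [hqn, hWn, hr] at heq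
    set A := ∑ k ∈ T, n k with hA
    set B := ∑ k ∈ T, n k ^ 2 with hB
    have h1 : (T.card : ℝ) * B = A ^ 2 := by
      field_simp at heq
      linarith
    have h2 : ∑ k ∈ T, ∑ l ∈ T, (n k - n l) ^ 2 = 0 := by
      have : ∑ k ∈ T, ∑ l ∈ T, (n k - n l) ^ 2 = 2 * ((T.card : ℝ) * B) - 2 * (A * A) := by
        have e1 : ∑ k ∈ T, ∑ l ∈ T, (n k) ^ 2 = (T.card : ℝ) * B := by
          simp [Finset.mul_sum, hB]
        have e2 : ∑ k ∈ T, ∑ l ∈ T, (n l) ^ 2 = (T.card : ℝ) * B := by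
          simp [hB]
        have e3 : ∑ k ∈ T, ∑ l ∈ T, n k * n l = A * A := by
          rw [hA, Finset.sum_mul_sum]
        have e4 : ∑ k ∈ T, ∑ l ∈ T, (n k - n l) ^ 2 = ∑ k ∈ T, ∑ l ∈ T, (n k) ^ 2
            + ∑ k ∈ T, ∑ l ∈ T, (n l) ^ 2 - 2 * ∑ k ∈ T, ∑ l ∈ T, n k * n l := by
          simp only [← Finset.sum_add_distrib, Finset.mul_sum, ← Finset.sum_sub_distrib]
          refine Finset.sum_congr rfl fun k _ => Finset.sum_congr rfl fun l _ => ?_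
          ring
        rw [e4, e1, e2, e3]; ring
      rw [this, h1]; ring
    intro k hk l hl
    rw [Finset.sum_eq_zero_iff_of_nonneg
      (fun k _ => Finset.sum_nonneg fun l _ => sq_nonneg _)] at h2
    have h3 := h2 k hk
    rw [Finset.sum_eq_zero_iff_of_nonneg (fun l _ => sq_nonneg _)] at h3
    have h4 := h3 l hl
    rw [pow_eq_zero_iff two_ne_zero, sub_eq_zero] at h4
    have hcard : ∀ k, n k = ((Finset.univ.filter fun a => X a ∧ f a = k).card : ℝ) := by
      intro k
      simp [n, χ]
    rw [hcard, hcard] at h4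
    exact_mod_cast h4

end core

section complex
variable {E : Type*} [Fintype E] [DecidableEq E]

/-- number of independent supersets of `T` of size `j` -/
noncomputable def cnt (Ind : Finset E → Prop) (j : ℕ) (T : Finset E) : ℕ :=
  (Finset.univ.filter fun I : Finset E => Ind I ∧ T ⊆ I ∧ I.card = j).card

/-- the count, restricted to sets of size exactly `n` -/
noncomputable def wt (Ind : Finset E → Prop) (j n : ℕ) (T : Finset E) : ℝ :=
  if T.card = n then (cnt Ind j T : ℝ) else 0

lemma wt_nonneg (Ind : Finset E → Prop) (j n : ℕ) (T : Finset E) : 0 ≤ wt Ind j n T := by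
  unfold wt; split_ifs <;> positivity

lemma cnt_sum (Ind : Finset E → Prop) (j : ℕ) (T : Finset E) :
    ∑ a ∈ Finset.univ.filter (fun a => a ∉ T), cnt Ind j (insert a T) = (j - T.card) * cnt Ind j T := by
  have h : ∀ a ∈ Finset.univ.filter (fun a => a ∉ T), cnt Ind j (insert a T) =
      ∑ I ∈ Finset.univ.filter (fun I : Finset E => Ind I ∧ T ⊆ I ∧ I.card = j),
        if a ∈ I then 1 else 0 := by
    intro a _
    rw [← Finset.sum_filter, Finset.sum_const, smul_eq_mul, mul_one, Finset.filter_filter]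
    unfold cnt
    congr 1
    ext I
    simp only [Finset.mem_filter, Finset.mem_univ, true_and, Finset.insert_subset_iff]
    tauto
  rw [Finset.sum_congr rfl h, Finset.sum_comm]
  have h2 : ∀ I ∈ Finset.univ.filter (fun I : Finset E => Ind I ∧ T ⊆ I ∧ I.card = j),
      (∑ a ∈ Finset.univ.filter (fun a => a ∉ T), if a ∈ I then 1 else 0) = j - T.card := by
    intro I hI
    simp only [Finset.mem_filter, Finset.mem_univ, true_and] at hI
    rw [← Finset.sum_filter, Finset.sum_const, smul_eq_mul, mul_one, Finset.filter_filter,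
      ← hI.2.2, ← Finset.card_sdiff_of_subset hI.2.1]
    congr 1
    ext a
    simp only [Finset.mem_filter, Finset.mem_univ, true_and, Finset.mem_sdiff]
    tauto
  rw [Finset.sum_congr rfl h2, Finset.sum_const, smul_eq_mul, mul_comm]
  rfl

lemma wt_sum (Ind : Finset E → Prop) (j n : ℕ) (hn : n ≤ j) (T : Finset E) (hT : T.card ≤ n) :
    ∑ a, wt Ind j (n + 1) (insert a T) = ((j : ℝ) - n) * wt Ind j n T := by
  rcases hT.eq_or_lt with h | h
  · have h1 := cnt_sum Ind j T
    rw [Finset.sum_filter] at h1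
    have h2 : ∀ a, wt Ind j (n + 1) (insert a T) =
        ((if a ∉ T then cnt Ind j (insert a T) else 0 : ℕ) : ℝ) := by
      intro a
      unfold wt
      by_cases ha : a ∈ T
      · simp [ha, h]
      · simp [ha, h]
    rw [Finset.sum_congr rfl fun a _ => h2 a, ← Nat.cast_sum, h1]
    unfold wt
    rw [if_pos h, h, Nat.cast_mul, Nat.cast_sub hn]
  · have h2 : ∀ a, wt Ind j (n + 1) (insert a T) = 0 := by
      intro a
      unfold wt
      rw [if_neg]
      have := Finset.card_insert_le a T
      omega
    simp only [h2, Finset.sum_const_zero]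
    unfold wt
    rw [if_neg (by omega)]; simp

/-- matrix part -/
noncomputable def PS (Ind : Finset E → Prop) (e : ℕ) (S : Finset E) (a b : E) : ℝ :=
  wt Ind (e + 2) (S.card + 2) (insert a (insert b S))
/-- vector part -/
noncomputable def qS (Ind : Finset E → Prop) (e : ℕ) (S : Finset E) (a : E) : ℝ :=
  wt Ind (e + 1) (S.card + 1) (insert a S)
/-- scalar part -/
noncomputable def rS (Ind : Finset E → Prop) (e : ℕ) (c : ℝ) (S : Finset E) : ℝ :=
  c * wt Ind e S.card S

/-- equality at `S` -/
def EqAt (Ind : Finset E → Prop) (e : ℕ) (c : ℝ) (S : Finset E) : Prop :=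
  (∑ a, ∑ b, PS Ind e S a b) * rS Ind e c S = (∑ a, qS Ind e S a) ^ 2

lemma PS_symm (Ind : Finset E → Prop) (e : ℕ) (S : Finset E) (a b : E) :
    PS Ind e S a b = PS Ind e S b a := by
  unfold PS; rw [Finset.insert_comm]

variable {Ind : Finset E → Prop}

lemma cnt_pos (e : ℕ)
    (ext : ∀ S, Ind S → S.card < e → ∃ a, a ∉ S ∧ Ind (insert a S)) (j : ℕ) (hj : j ≤ e) :
    ∀ m (S : Finset E), Ind S → S.card + m = j → 1 ≤ cnt Ind j S := by
  intro m
  induction m with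
  | zero =>
    intro S hS hc
    unfold cnt
    rw [Nat.succ_le_iff, Finset.card_pos]
    exact ⟨S, by simpa [hS] using hc⟩
  | succ m ih =>
    intro S hS hc
    obtain ⟨a, ha, hi⟩ := ext S hS (by omega)
    have h := ih (insert a S) hi (by rw [Finset.card_insert_of_notMem ha]; omega)
    refine h.trans (Finset.card_le_card ?_)
    intro I
    simp only [Finset.mem_filter, Finset.mem_univ, true_and, Finset.insert_subset_iff]
    tauto

lemma cnt_zero (hered : ∀ S T, S ⊆ T → Ind T → Ind S) (j : ℕ) (T : Finset E) (hT : ¬ Ind T) :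
    cnt Ind j T = 0 := by
  unfold cnt
  rw [Finset.card_eq_zero, Finset.filter_eq_empty_iff]
  rintro I - ⟨h1, h2, -⟩
  exact hT (hered _ _ h2 h1)

lemma cnt_self (hered : ∀ S T, S ⊆ T → Ind T → Ind S) (T : Finset E) :
    cnt Ind T.card T = if Ind T then 1 else 0 := by
  split_ifs with h
  · unfold cnt
    rw [Finset.card_eq_one]
    refine ⟨T, ?_⟩
    ext I
    simp only [Finset.mem_filter, Finset.mem_univ, true_and, Finset.mem_singleton]
    constructor
    · rintro ⟨_, h2, h3⟩
      exact (Finset.eq_of_subset_of_card_le h2 h3.le).symm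
    · rintro rfl; exact ⟨h, subset_rfl, rfl⟩
  · exact cnt_zero hered _ _ h

lemma wt_zero (hered : ∀ S T, S ⊆ T → Ind T → Ind S) (j n : ℕ) (T : Finset E) (hT : ¬ Ind T) :
    wt Ind j n T = 0 := by
  unfold wt; simp [cnt_zero hered j T hT]

theorem complex_main (e : ℕ) (c : ℝ)
    (hered : ∀ S T, S ⊆ T → Ind T → Ind S)
    (ext : ∀ S, Ind S → S.card < e + 2 → ∃ a, a ∉ S ∧ Ind (insert a S))
    (par : ∀ S a b x, a ∉ S → b ∉ S → x ∉ S → Ind (insert a S) → Ind (insert b S) → a ≠ b →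
      ¬ Ind (insert a (insert b S)) → x ≠ a → Ind (insert x (insert a S)) →
      Ind (insert x (insert b S)))
    (base : ∀ S, Ind S → S.card = e → Hyp (PS Ind e S) (qS Ind e S) (rS Ind e c S)) :
    ∀ m S, Ind S → S.card + m = e → Hyp (PS Ind e S) (qS Ind e S) (rS Ind e c S) ∧
      (EqAt Ind e c S → ∀ S', S ⊆ S' → Ind S' → S'.card = e → EqAt Ind e c S') := by
  intro m
  induction m with
  | zero =>
    intro S hS hc
    refine ⟨base S hS (by simpa using hc), ?_⟩
    intro h S' hSS' _ hc'
    rw [← Finset.eq_of_subset_of_card_le hSS' (by omega)]; exact h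
  | succ m ih =>
    intro S hS hc
    -- the families
    let n := S.card
    let Pf : E → E → E → ℝ := fun x a b =>
      wt Ind (e + 2) (S.card + 3) (insert a (insert b (insert x S)))
    let qf : E → E → ℝ := fun x a => wt Ind (e + 1) (S.card + 2) (insert a (insert x S))
    let rf : E → ℝ := fun x => c * wt Ind e (S.card + 1) (insert x S)
    have good : ∀ x, x ∉ S → Pf x = PS Ind e (insert x S) ∧ qf x = qS Ind e (insert x S) ∧
        rf x = rS Ind e c (insert x S) := by
      intro x hx
      have hcx := Finset.card_insert_of_notMem hx
      refine ⟨?_, ?_, ?_⟩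
      · funext a b; simp only [Pf, PS, hcx]
      · funext a; simp only [qf, qS, hcx]
      · simp only [rf, rS, hcx]
    have bad : ∀ x, ¬ (x ∉ S ∧ Ind (insert x S)) → (∀ a b, Pf x a b = 0) ∧ (∀ a, qf x a = 0) ∧
        rf x = 0 := by
      intro x hx
      by_cases hxS : x ∈ S
      · have hcs : insert x S = S := Finset.insert_eq_of_mem hxS
        refine ⟨fun a b => ?_, fun a => ?_, ?_⟩
        · simp only [Pf, wt, hcs]
          rw [if_neg]
          have := Finset.card_insert_le a (insert b S)
          have := Finset.card_insert_le b S
          omega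
        · simp only [qf, wt, hcs]
          rw [if_neg]
          have := Finset.card_insert_le a S
          omega
        · simp only [rf, wt, hcs]
          rw [if_neg (by omega), mul_zero]
      · have hi : ¬ Ind (insert x S) := fun h => hx ⟨hxS, h⟩
        refine ⟨fun a b => ?_, fun a => ?_, ?_⟩
        · exact wt_zero hered _ _ _ fun h => hi (hered _ _
            ((Finset.subset_insert _ _).trans (Finset.subset_insert _ _)) h)
        · exact wt_zero hered _ _ _ fun h => hi (hered _ _ (Finset.subset_insert _ _) h)
        · simp only [rf, wt_zero hered _ _ _ hi, mul_zero]
    have cardle1 : ∀ a, (insert a S).card ≤ S.card + 1 := fun a => Finset.card_insert_le a S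
    have cardle2 : ∀ a b, (insert a (insert b S)).card ≤ S.card + 2 := fun a b =>
      (Finset.card_insert_le _ _).trans (by have := cardle1 b; omega)
    have hmn : ((m : ℝ) + 1) = (e : ℝ) - S.card := by
      have : (S.card : ℝ) + ((m : ℝ) + 1) = e := by exact_mod_cast hc
      linarith
    have hD : ∀ a, ∑ b, PS Ind e S a b = ((m : ℝ) + 2) * wt Ind (e + 2) (S.card + 1) (insert a S) := by
      intro a
      have := wt_sum Ind (e + 2) (S.card + 1) (by omega) (insert a S) (cardle1 a)
      push_cast at this
      rw [show ((m : ℝ) + 2) = (e : ℝ) + 2 - (S.card + 1) by linarith, ← this]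
      refine Finset.sum_congr rfl fun b _ => ?_
      unfold PS; rw [Finset.insert_comm]
    have hDpos : ∀ a, a ∉ S → Ind (insert a S) → 0 < ∑ b, PS Ind e S a b := by
      intro a ha hi
      rw [hD]
      have h1 := Finset.card_insert_of_notMem ha
      have := cnt_pos (e + 2) ext (e + 2) le_rfl (m + 2) (insert a S) hi (by omega)
      unfold wt
      rw [if_pos h1]
      have : (0 : ℝ) < cnt Ind (e + 2) (insert a S) := by exact_mod_cast this
      positivity
    have hPge : ∀ a b, a ≠ b → a ∉ S → b ∉ S → Ind (insert a (insert b S)) → 1 ≤ PS Ind e S a b := by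
      intro a b hab ha hb hi
      have h1 := Finset.card_insert_of_notMem hb
      have h2 := Finset.card_insert_of_notMem (s := insert b S) (a := a) (by simp [hab, ha])
      have := cnt_pos (e + 2) ext (e + 2) le_rfl (m + 1) _ hi (by omega)
      unfold PS wt
      rw [if_pos (by omega)]
      exact_mod_cast this
    have hDind : ∀ a, ∑ b, PS Ind e S a b ≠ 0 → a ∉ S ∧ Ind (insert a S) := by
      intro a h
      rw [hD] at h
      have h : wt Ind (e + 2) (S.card + 1) (insert a S) ≠ 0 := right_ne_zero_of_mul h
      constructor
      · intro ha
        apply h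
        unfold wt
        rw [if_neg]
        rw [Finset.insert_eq_of_mem ha]; omega
      · by_contra hi
        exact h (wt_zero hered _ _ _ hi)
    have key := trickle (PS Ind e S) (qS Ind e S) (rS Ind e c S) Pf qf rf ((m : ℝ) + 1)
      (by positivity) (PS_symm Ind e S) (fun a b => wt_nonneg _ _ _ _)
      (fun x a b => by simp only [Pf]; rw [Finset.insert_comm]) ?_ ?_ ?_ ?_ ?_ ?_ ?_ ?_ ?_
    · refine ⟨key.1, fun heq S' hSS' hS' hc' => ?_⟩
      obtain ⟨x, hxS', hxS⟩ : ∃ x ∈ S', x ∉ S := by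
        by_contra hcon
        push Not at hcon
        have := Finset.card_le_card (show S' ⊆ S from hcon)
        omega
      have hsub : insert x S ⊆ S' := Finset.insert_subset hxS' hSS'
      have hcx := Finset.card_insert_of_notMem hxS
      refine (ih (insert x S) (hered _ _ hsub hS') (by omega)).2 ?_ S' hsub hS' hc'
      have := key.2 heq x
      obtain ⟨g1, g2, g3⟩ := good x hxS
      rw [g1, g2, g3] at this
      exact this
    · intro b x
      have := wt_sum Ind (e + 2) (S.card + 2) (by omega) (insert b (insert x S)) (cardle2 b x)
      push_cast at this
      rw [hmn]
      unfold PS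
      rw [show (e : ℝ) - S.card = (e : ℝ) + 2 - (S.card + 2) by ring, ← this]
      refine Finset.sum_congr rfl fun a _ => ?_
      simp only [Pf]
      congr 1
      ext y; simp only [Finset.mem_insert]; tauto
    · intro b
      have := wt_sum Ind (e + 1) (S.card + 1) (by omega) (insert b S) (cardle1 b)
      push_cast at this
      rw [hmn]
      unfold qS
      rw [show (e : ℝ) - S.card = (e : ℝ) + 1 - (S.card + 1) by ring, ← this]
      refine Finset.sum_congr rfl fun a _ => ?_
      simp only [qf]
      rw [Finset.insert_comm]
    · have := wt_sum Ind e S.card (by omega) S le_rfl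
      simp only [rf, ← Finset.mul_sum]
      rw [this, hmn]; unfold rS; ring
    · intro a x
      have := wt_sum Ind (e + 2) (S.card + 2) (by omega) (insert a (insert x S)) (cardle2 a x)
      push_cast at this
      rw [hmn]
      unfold PS
      rw [show (e : ℝ) - S.card = (e : ℝ) + 2 - (S.card + 2) by ring, ← this]
      refine Finset.sum_congr rfl fun a _ => ?_
      simp only [Pf]
      congr 1
      ext y; simp only [Finset.mem_insert]; tauto
    · intro b
      have := wt_sum Ind (e + 1) (S.card + 1) (by omega) (insert b S) (cardle1 b)
      push_cast at this
      rw [hmn]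
      unfold qS
      rw [show (e : ℝ) - S.card = (e : ℝ) + 1 - (S.card + 1) by ring, ← this]
    · intro x
      by_cases hx : x ∉ S ∧ Ind (insert x S)
      · obtain ⟨g1, g2, g3⟩ := good x hx.1
        rw [g1, g2, g3]
        have hcx := Finset.card_insert_of_notMem hx.1
        exact (ih (insert x S) hx.2 (by omega)).1
      · obtain ⟨g1, g2, g3⟩ := bad x hx
        intro v s
        simp only [g1, Finset.sum_const_zero, zero_mul]
        positivity
    · intro x hx0
      have hx : ¬ (x ∉ S ∧ Ind (insert x S)) := fun h => (hDpos x h.1 h.2).ne' hx0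
      obtain ⟨g1, g2, g3⟩ := bad x hx
      constructor
      · by_cases hxS : x ∈ S
        · unfold qS wt
          rw [if_neg]
          rw [Finset.insert_eq_of_mem hxS]; omega
        · exact wt_zero hered _ _ _ fun h => hx ⟨hxS, h⟩
      · intro v s
        simp [Quad, g1, g2, g3]
    · obtain ⟨a, ha, hi⟩ := ext S hS (by omega)
      refine (hDpos a ha hi).trans_le ?_
      exact Finset.single_le_sum (f := fun a => ∑ b, PS Ind e S a b)
        (fun a _ => Finset.sum_nonneg fun b _ => wt_nonneg _ _ _ _) (Finset.mem_univ a)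
    · intro a b ha hb
      obtain ⟨ha, hia⟩ := hDind a ha
      obtain ⟨hb, hib⟩ := hDind b hb
      obtain ⟨x, hx, hix⟩ := ext (insert a S) hia (by have := cardle1 a; omega)
      rw [Finset.mem_insert, not_or] at hx
      have hax : 1 ≤ PS Ind e S a x := by
        rw [PS_symm]; exact hPge x a hx.1 hx.2 ha hix
      by_cases hab : a = b
      · subst hab
        exact Or.inr ⟨x, hax, by rw [PS_symm]; exact hax⟩
      by_cases hi : Ind (insert a (insert b S))
      · exact Or.inl (hPge a b hab ha hb hi)
      · right
        refine ⟨x, hax, hPge x b ?_ hx.2 hb (par S a b x ha hb hx.2 hia hib hab hi hx.1 hix)⟩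
        rintro rfl
        exact hi (by rw [Finset.insert_comm]; exact hix)

end complex

section graph
variable {V : Type*} [Fintype V] [DecidableEq V]

/-- components of the forest `F` -/
def Cmp (F : Finset (Sym2 V)) : Type _ :=
  (SimpleGraph.fromEdgeSet (F : Set (Sym2 V))).ConnectedComponent

/-- the component of a vertex -/
def cmk (F : Finset (Sym2 V)) (x : V) : Cmp F :=
  (SimpleGraph.fromEdgeSet (F : Set (Sym2 V))).connectedComponentMk x

lemma cmk_surj (F : Finset (Sym2 V)) : Function.Surjective (cmk F) := fun c => Quot.exists_rep c

noncomputable instance (F : Finset (Sym2 V)) : Fintype (Cmp F) :=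
  Fintype.ofSurjective (cmk F) (cmk_surj F)

lemma cmk_eq (F : Finset (Sym2 V)) (x y : V) :
    cmk F x = cmk F y ↔ (SimpleGraph.fromEdgeSet (F : Set (Sym2 V))).Reachable x y :=
  SimpleGraph.ConnectedComponent.eq

/-- independent sets of the graphical matroid -/
def GInd (G : SimpleGraph V) (F : Finset (Sym2 V)) : Prop :=
  (F : Set (Sym2 V)) ⊆ G.edgeSet ∧ (SimpleGraph.fromEdgeSet (F : Set (Sym2 V))).IsAcyclic

lemma cmk_of_mem (F : Finset (Sym2 V)) (u v : V) (h : s(u, v) ∈ F) : cmk F u = cmk F v := by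
  by_cases huv : u = v
  · rw [huv]
  · rw [cmk_eq]
    exact SimpleGraph.Adj.reachable (by simp [h, huv])

lemma cmk_mono (F : Finset (Sym2 V)) (e : Sym2 V) (x y : V) (h : cmk F x = cmk F y) :
    cmk (insert e F) x = cmk (insert e F) y := by
  rw [cmk_eq] at h ⊢
  exact h.mono (SimpleGraph.fromEdgeSet_mono (by simp))

lemma cmk_insert (F : Finset (Sym2 V)) (u v x y : V) :
    cmk (insert s(u, v) F) x = cmk (insert s(u, v) F) y ↔
      cmk F x = cmk F y ∨ (cmk F x = cmk F u ∧ cmk F y = cmk F v) ∨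
        (cmk F x = cmk F v ∧ cmk F y = cmk F u) := by
  constructor
  · intro h
    rw [cmk_eq] at h
    obtain ⟨p⟩ := h
    induction p with
    | nil => exact Or.inl rfl
    | @cons a b c hadj p ih =>
      rw [SimpleGraph.fromEdgeSet_adj] at hadj
      simp only [Finset.coe_insert, Set.mem_insert_iff, Finset.mem_coe] at hadj
      rcases hadj.1 with h | h
      · rw [Sym2.eq_iff] at h
        rcases h with ⟨rfl, rfl⟩ | ⟨rfl, rfl⟩
        · grind
        · grind
      · have := cmk_of_mem F a b h
        rw [this]; exact ih
  · have huv : cmk (insert s(u, v) F) u = cmk (insert s(u, v) F) v :=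
      cmk_of_mem _ u v (by simp)
    rintro (h | ⟨h1, h2⟩ | ⟨h1, h2⟩)
    · exact cmk_mono F _ _ _ h
    · rw [cmk_mono F s(u, v) _ _ h1, cmk_mono F s(u, v) _ _ h2, huv]
    · rw [cmk_mono F s(u, v) _ _ h1, cmk_mono F s(u, v) _ _ h2, huv]

lemma fes_insert (F : Finset (Sym2 V)) (u v : V) :
    SimpleGraph.fromEdgeSet ((insert s(u, v) F : Finset (Sym2 V)) : Set (Sym2 V)) =
      SimpleGraph.fromEdgeSet (F : Set (Sym2 V)) ⊔ SimpleGraph.edge u v := by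
  rw [Finset.coe_insert, Set.insert_eq, SimpleGraph.fromEdgeSet_union, sup_comm]
  rfl

lemma GInd_hered (G : SimpleGraph V) (S T : Finset (Sym2 V)) (h : S ⊆ T) (hT : GInd G T) :
    GInd G S :=
  ⟨fun _ hx => hT.1 (h hx), hT.2.anti (SimpleGraph.fromEdgeSet_mono (by exact_mod_cast h))⟩

/-- class of an edge -/
def epi (F : Finset (Sym2 V)) (e : Sym2 V) : Sym2 (Cmp F) := Sym2.map (cmk F) e

lemma GInd_insert (G : SimpleGraph V) (S : Finset (Sym2 V)) (hS : GInd G S) (a : Sym2 V) :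
    (a ∉ S ∧ GInd G (insert a S)) ↔ (a ∈ G.edgeSet ∧ ¬ (epi S a).IsDiag) := by
  induction a with
  | _ u v =>
  simp only [epi, Sym2.map_mk, Sym2.mk_isDiag_iff]
  unfold GInd
  rw [fes_insert, SimpleGraph.isAcyclic_sup_fromEdgeSet_iff, ← cmk_eq]
  constructor
  · rintro ⟨h1, h2, h3, h4⟩
    have he : s(u, v) ∈ G.edgeSet := h2 (by simp)
    refine ⟨he, fun h => ?_⟩
    rcases h4 h with h | h
    · exact G.ne_of_adj he h
    · rw [SimpleGraph.fromEdgeSet_adj] at h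
      exact h1 h.1
  · rintro ⟨h1, h2⟩
    refine ⟨fun h => h2 (cmk_of_mem S u v h), ?_, hS.2, fun h => absurd h h2⟩
    rw [Finset.coe_insert]
    exact Set.insert_subset h1 hS.1

lemma GInd_pair (G : SimpleGraph V) (S : Finset (Sym2 V)) (hS : GInd G S) (a b : Sym2 V)
    (ha : a ∈ G.edgeSet) (hb : b ∈ G.edgeSet) (hda : ¬ (epi S a).IsDiag)
    (hdb : ¬ (epi S b).IsDiag) (hab : a ≠ b) :
    GInd G (insert a (insert b S)) ↔ epi S a ≠ epi S b := by
  have hb' := (GInd_insert G S hS b).2 ⟨hb, hdb⟩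
  have ha' := (GInd_insert G S hS a).2 ⟨ha, hda⟩
  have h := GInd_insert G (insert b S) hb'.2 a
  have : a ∉ insert b S := by simp [hab, ha'.1]
  simp only [this, not_false_eq_true, true_and, ha] at h
  rw [h]
  clear h this ha' hb' hab ha hb
  induction a with
  | _ x y =>
  induction b with
  | _ u v =>
  simp only [epi, Sym2.map_mk, Sym2.mk_isDiag_iff, cmk_insert, Sym2.eq_iff, ne_eq] at *
  tauto

lemma card_Cmp (G : SimpleGraph V) (F : Finset (Sym2 V)) (hF : GInd G F) :
    Fintype.card (Cmp F) + F.card = Fintype.card V := by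
  induction F using Finset.induction_on with
  | empty =>
    rw [Finset.card_empty, add_zero]
    symm
    refine Fintype.card_of_bijective (f := cmk (∅ : Finset (Sym2 V))) ⟨?_, cmk_surj _⟩
    intro x y h
    rw [cmk_eq] at h
    simpa using h
  | @insert e F he ih =>
    have hF' : GInd G F := GInd_hered G _ _ (Finset.subset_insert _ _) hF
    have hcl := (GInd_insert G F hF' e).1 ⟨he, hF⟩
    rw [Finset.card_insert_of_notMem he]
    have ih := ih hF'
    induction e with
    | _ u v =>
    simp only [epi, Sym2.map_mk, Sym2.mk_isDiag_iff] at hcl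
    have : Fintype.card {c : Cmp F // c ≠ cmk F v} = Fintype.card (Cmp (insert s(u, v) F)) := by
      let f : Cmp F → Cmp (insert s(u, v) F) :=
        Quot.lift (cmk (insert s(u, v) F)) fun x y h =>
          cmk_mono F s(u, v) x y ((cmk_eq F x y).2 h)
      have hf : ∀ x, f (cmk F x) = cmk (insert s(u, v) F) x := fun x => rfl
      refine Fintype.card_of_bijective (f := fun c => f c.1) ⟨?_, ?_⟩
      · rintro ⟨c, hc⟩ ⟨d, hd⟩ h
        obtain ⟨x, rfl⟩ := cmk_surj F c
        obtain ⟨y, rfl⟩ := cmk_surj F d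
        simp only [hf, cmk_insert] at h
        simp only [Subtype.mk.injEq]
        tauto
      · intro c
        obtain ⟨x, rfl⟩ := cmk_surj _ c
        by_cases hx : cmk F x = cmk F v
        · refine ⟨⟨cmk F u, hcl.2⟩, ?_⟩
          simp only [hf, cmk_insert]; tauto
        · exact ⟨⟨cmk F x, hx⟩, rfl⟩
    rw [← this]
    have h2 : Fintype.card {c : Cmp F // c ≠ cmk F v} = Fintype.card (Cmp F) - 1 := by
      simp
    have h3 : 0 < Fintype.card (Cmp F) := Fintype.card_pos_iff.2 ⟨cmk F v⟩
    omega

lemma GInd_ext (G : SimpleGraph V) (hG : G.Connected) (S : Finset (Sym2 V)) (hS : GInd G S)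
    (hc : S.card + 1 < Fintype.card V) : ∃ a, a ∉ S ∧ GInd G (insert a S) := by
  by_contra hcon
  push Not at hcon
  have hadj : ∀ u v, G.Adj u v → cmk S u = cmk S v := by
    intro u v h
    by_contra hne
    have := (GInd_insert G S hS s(u, v)).2 ⟨h, by simpa [epi] using hne⟩
    exact hcon _ this.1 this.2
  have hall : ∀ x y, cmk S x = cmk S y := by
    intro x y
    obtain ⟨p⟩ := hG.preconnected x y
    induction p with
    | nil => rfl
    | cons h p ih => exact (hadj _ _ h).trans ih
  have h1 : Fintype.card (Cmp S) ≤ 1 := by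
    rw [Fintype.card_le_one_iff]
    intro c d
    obtain ⟨x, rfl⟩ := cmk_surj S c
    obtain ⟨y, rfl⟩ := cmk_surj S d
    exact hall x y
  have := card_Cmp G S hS
  omega

lemma GInd_par (G : SimpleGraph V) (S : Finset (Sym2 V)) (a b x : Sym2 V) (ha : a ∉ S)
    (hb : b ∉ S) (hx : x ∉ S) (hia : GInd G (insert a S)) (hib : GInd G (insert b S))
    (hab : a ≠ b) (hn : ¬ GInd G (insert a (insert b S))) (hxa : x ≠ a)
    (hix : GInd G (insert x (insert a S))) : GInd G (insert x (insert b S)) := by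
  have hS : GInd G S := GInd_hered G _ _ (Finset.subset_insert _ _) hia
  have hixS : GInd G (insert x S) := GInd_hered G _ _
    (Finset.insert_subset_insert _ (Finset.subset_insert _ _)) hix
  obtain ⟨a1, a2⟩ := (GInd_insert G S hS a).1 ⟨ha, hia⟩
  obtain ⟨b1, b2⟩ := (GInd_insert G S hS b).1 ⟨hb, hib⟩
  obtain ⟨x1, x2⟩ := (GInd_insert G S hS x).1 ⟨hx, hixS⟩
  rw [GInd_pair G S hS a b a1 b1 a2 b2 hab, not_not] at hn
  rw [GInd_pair G S hS x a x1 a1 x2 a2 hxa, hn] at hix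
  have hxb : x ≠ b := fun h => hix (by rw [h])
  exact (GInd_pair G S hS x b x1 b1 x2 b2 hxb).2 hix

/-- number of edges in a class -/
noncomputable def mult (G : SimpleGraph V) (S : Finset (Sym2 V)) (c d : Cmp S) : ℕ :=
  (Finset.univ.filter fun a => a ∈ G.edgeSet ∧ epi S a = s(c, d)).card

lemma graph_base (G : SimpleGraph V) (e : ℕ) (S : Finset (Sym2 V)) (hS : GInd G S)
    (hc : S.card = e) (hN : e + 3 ≤ Fintype.card V) (c : ℝ)
    (hcc : c = 1 + 1 / ((Nat.choose (Fintype.card V - e) 2 : ℝ) - 1)) :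
    Hyp (PS (GInd G) e S) (qS (GInd G) e S) (rS (GInd G) e c S) ∧
      (EqAt (GInd G) e c S → ∀ p q p' q' : Cmp S, p ≠ q → p' ≠ q' →
        mult G S p q = mult G S p' q') := by
  let X : Sym2 V → Prop := fun a => a ∈ G.edgeSet ∧ ¬ (epi S a).IsDiag
  let T : Finset (Sym2 (Cmp S)) := Finset.univ.filter fun t => ¬ t.IsDiag
  have hTc : T.card = Nat.choose (Fintype.card V - e) 2 := by
    have h1 := card_Cmp G S hS
    have h2 := Sym2.card_subtype_not_diag (α := Cmp S)
    rw [Fintype.card_subtype] at h2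
    rw [show Fintype.card V - e = Fintype.card (Cmp S) by omega, ← h2]
  have hT2 : 2 ≤ T.card := by
    rw [hTc]
    calc 2 ≤ Nat.choose 3 2 := by decide
      _ ≤ _ := Nat.choose_le_choose 2 (by omega)
  have hered := GInd_hered G
  have key := base_hyp X (epi S) T (fun a ha => by simpa [T] using ha.2) hT2
    (PS (GInd G) e S) (qS (GInd G) e S) (rS (GInd G) e c S) ?_ ?_ ?_
  · refine ⟨key.1, fun heq p q p' q' hpq hpq' => ?_⟩
    have h := key.2 heq s(p, q) (by simpa [T] using hpq) s(p', q') (by simpa [T] using hpq')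
    have hm : ∀ p q : Cmp S, p ≠ q → mult G S p q =
        (Finset.univ.filter fun a => X a ∧ epi S a = s(p, q)).card := by
      intro p q hpq
      unfold mult
      congr 1
      ext a
      simp only [Finset.mem_filter, Finset.mem_univ, true_and, X]
      constructor
      · rintro ⟨h1, h2⟩
        exact ⟨⟨h1, by rw [h2]; simpa using hpq⟩, h2⟩
      · rintro ⟨⟨h1, _⟩, h2⟩
        exact ⟨h1, h2⟩
    rw [hm p q hpq, hm p' q' hpq']
    convert h
  · intro a b
    unfold PS wt
    have hca := Finset.card_insert_le a (insert b S)
    have hcb := Finset.card_insert_le b S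
    by_cases hX : X a ∧ X b ∧ epi S a ≠ epi S b
    · obtain ⟨ha, hb, hne⟩ := hX
      have hab : a ≠ b := fun h => hne (by rw [h])
      have haS := (GInd_insert G S hS a).2 ha
      have hbS := (GInd_insert G S hS b).2 hb
      have hi := (GInd_pair G S hS a b ha.1 hb.1 ha.2 hb.2 hab).2 hne
      have h1 : (insert a (insert b S)).card = e + 2 := by
        rw [Finset.card_insert_of_notMem (by simp [hab, haS.1]),
          Finset.card_insert_of_notMem hbS.1, hc]
      have h2 := cnt_self hered (insert a (insert b S))
      rw [h1, if_pos hi] at h2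
      rw [if_pos (by omega), h2, if_pos ⟨ha, hb, hne⟩]; simp
    · rw [if_neg hX]
      split_ifs with h1
      · have hi : ¬ GInd G (insert a (insert b S)) := by
          intro hi
          apply hX
          have hbS : b ∉ S := by
            intro hb
            rw [Finset.insert_eq_of_mem hb] at h1 hca
            have := Finset.card_insert_le a S
            omega
          have haS : a ∉ insert b S := by
            intro ha
            rw [Finset.insert_eq_of_mem ha] at h1
            omega
          rw [Finset.mem_insert, not_or] at haS
          have ha := (GInd_insert G S hS a).1 ⟨haS.2, hered _ _
            (Finset.insert_subset_insert _ (Finset.subset_insert _ _)) hi⟩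
          have hb := (GInd_insert G S hS b).1 ⟨hbS, hered _ _ (Finset.subset_insert _ _) hi⟩
          exact ⟨ha, hb, (GInd_pair G S hS a b ha.1 hb.1 ha.2 hb.2 haS.1).1 hi⟩
        rw [cnt_zero hered _ _ hi]; simp
      · rfl
  · intro a
    unfold qS wt
    by_cases hX : X a
    · have haS := (GInd_insert G S hS a).2 hX
      have h1 : (insert a S).card = e + 1 := by
        rw [Finset.card_insert_of_notMem haS.1, hc]
      have h2 := cnt_self hered (insert a S)
      rw [h1, if_pos haS.2] at h2
      rw [if_pos (by omega), h2, if_pos hX]; simp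
    · rw [if_neg hX]
      split_ifs with h1
      · have hi : ¬ GInd G (insert a S) := by
          intro hi
          apply hX
          have haS : a ∉ S := by
            intro ha
            rw [Finset.insert_eq_of_mem ha] at h1
            omega
          exact (GInd_insert G S hS a).1 ⟨haS, hi⟩
        rw [cnt_zero hered _ _ hi]; simp
      · rfl
  · unfold rS wt
    have h2 := cnt_self hered S
    rw [if_pos hS, hc] at h2
    rw [if_pos rfl, h2, hTc, hcc]; simp

lemma mult_comm (G : SimpleGraph V) (S : Finset (Sym2 V)) (c d : Cmp S) :
    mult G S c d = mult G S d c := by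
  unfold mult; rw [Sym2.eq_swap]

lemma mult_insert_out (G : SimpleGraph V) (S : Finset (Sym2 V)) (u v a b : V)
    (h1 : cmk S a ≠ cmk S u) (h2 : cmk S a ≠ cmk S v) (h3 : cmk S b ≠ cmk S u)
    (h4 : cmk S b ≠ cmk S v) :
    mult G (insert s(u, v) S) (cmk _ a) (cmk _ b) = mult G S (cmk S a) (cmk S b) := by
  unfold mult
  congr 1
  ext f
  simp only [Finset.mem_filter, Finset.mem_univ, true_and]
  refine and_congr_right fun _ => ?_
  induction f with
  | _ x y =>
  simp only [epi, Sym2.map_mk, Sym2.eq_iff, cmk_insert]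
  tauto

lemma mult_insert_in (G : SimpleGraph V) (S : Finset (Sym2 V)) (u v a : V)
    (h1 : cmk S a ≠ cmk S u) (h2 : cmk S a ≠ cmk S v) (h3 : cmk S u ≠ cmk S v) :
    mult G (insert s(u, v) S) (cmk _ a) (cmk _ u) =
      mult G S (cmk S a) (cmk S u) + mult G S (cmk S a) (cmk S v) := by
  unfold mult
  rw [← Finset.card_union_of_disjoint]
  · congr 1
    ext f
    simp only [Finset.mem_filter, Finset.mem_univ, true_and, Finset.mem_union, ← and_or_left]
    refine and_congr_right fun _ => ?_
    induction f with
    | _ x y =>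
    simp only [epi, Sym2.map_mk, Sym2.eq_iff, cmk_insert]
    grind
  · rw [Finset.disjoint_filter]
    rintro f - ⟨_, h⟩ ⟨_, h'⟩
    rw [h, Sym2.eq_iff] at h'
    grind

lemma no_uniform (G : SimpleGraph V) (hG : G.Connected) (e : ℕ) (he : 1 ≤ e)
    (hN : e + 4 ≤ Fintype.card V)
    (huni : ∀ S, GInd G S → S.card = e → ∀ p q p' q' : Cmp S, p ≠ q → p' ≠ q' →
        mult G S p q = mult G S p' q') : False := by
  -- a forest of size `e - 1`
  have hempty : GInd G ∅ := ⟨by simp, by simp⟩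
  have hcnt := cnt_pos (Ind := GInd G) e (fun S hS h => GInd_ext G hG S hS (by omega)) (e - 1)
    (by omega) (e - 1) ∅ hempty (by simp)
  obtain ⟨S, hS⟩ := Finset.card_pos.1 (Nat.lt_of_lt_of_le Nat.zero_lt_one hcnt)
  simp only [Finset.mem_filter, Finset.mem_univ, true_and] at hS
  obtain ⟨hS, -, hSc⟩ := hS
  have hcard := card_Cmp G S hS
  have K : ∀ p q : Cmp S, p ≠ q → 1 ≤ mult G S p q → ∃ M, 1 ≤ M ∧
      (∀ r s, r ≠ p → r ≠ q → s ≠ p → s ≠ q → r ≠ s → mult G S r s = M) ∧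
      (∀ r, r ≠ p → r ≠ q → mult G S r p + mult G S r q = M) := by
    intro p q hpq hpos
    obtain ⟨f, hf⟩ := Finset.card_pos.1 (Nat.lt_of_lt_of_le Nat.zero_lt_one hpos)
    simp only [Finset.mem_filter, Finset.mem_univ, true_and] at hf
    obtain ⟨u, v, rfl, rfl, hfE⟩ : ∃ u v, cmk S u = p ∧ cmk S v = q ∧ s(u, v) ∈ G.edgeSet := by
      obtain ⟨h1, h2⟩ := hf
      induction f with
      | _ x y =>
      simp only [epi, Sym2.map_mk, Sym2.eq_iff] at h2
      rcases h2 with h2 | h2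
      · exact ⟨x, y, h2.1, h2.2, h1⟩
      · exact ⟨y, x, h2.2, h2.1, by rw [Sym2.eq_swap]; exact h1⟩
    obtain ⟨hnS, hS'⟩ := (GInd_insert G S hS s(u, v)).2 ⟨hfE, by simpa [epi] using hpq⟩
    have hc' := Finset.card_insert_of_notMem hnS
    have huni' := huni _ hS' (by omega)
    obtain ⟨g, hg, hig⟩ := GInd_ext G hG _ hS' (by omega)
    obtain ⟨g1, g2⟩ := (GInd_insert G _ hS' g).1 ⟨hg, hig⟩
    obtain ⟨p0, q0, hpq0, hM⟩ : ∃ p0 q0 : Cmp (insert s(u, v) S), p0 ≠ q0 ∧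
        1 ≤ mult G (insert s(u, v) S) p0 q0 := by
      induction g with
      | _ x y =>
      refine ⟨cmk _ x, cmk _ y, by simpa [epi] using g2, ?_⟩
      rw [Nat.succ_le_iff]
      exact Finset.card_pos.2 ⟨s(x, y), Finset.mem_filter.2 ⟨Finset.mem_univ _, g1, rfl⟩⟩
    refine ⟨_, hM, ?_, ?_⟩
    · intro r s h1 h2 h3 h4 h5
      obtain ⟨a, rfl⟩ := cmk_surj S r
      obtain ⟨b, rfl⟩ := cmk_surj S s
      rw [← mult_insert_out G S u v a b h1 h2 h3 h4]
      refine huni' _ _ _ _ ?_ hpq0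
      rw [ne_eq, cmk_insert]; tauto
    · intro r h1 h2
      obtain ⟨a, rfl⟩ := cmk_surj S r
      rw [← mult_insert_in G S u v a h1 h2 hpq]
      refine huni' _ _ _ _ ?_ hpq0
      rw [ne_eq, cmk_insert]; tauto
  -- an edge between two components
  obtain ⟨g, hg, hig⟩ := GInd_ext G hG S hS (by omega)
  obtain ⟨g1, g2⟩ := (GInd_insert G _ hS g).1 ⟨hg, hig⟩
  obtain ⟨u, v, huv, hM⟩ : ∃ p0 q0 : Cmp S, p0 ≠ q0 ∧ 1 ≤ mult G S p0 q0 := by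
    induction g with
    | _ x y =>
    refine ⟨cmk _ x, cmk _ y, by simpa [epi] using g2, ?_⟩
    rw [Nat.succ_le_iff]
    exact Finset.card_pos.2 ⟨s(x, y), Finset.mem_filter.2 ⟨Finset.mem_univ _, g1, rfl⟩⟩
  -- three more components
  have h3 : 2 < ((Finset.univ : Finset (Cmp S)) \ {u, v}).card := by
    rw [Finset.card_sdiff_of_subset (Finset.subset_univ _), Finset.card_univ, Finset.card_pair huv]
    omega
  obtain ⟨a, b, z, ha, hb, hz, hab, haz, hbz⟩ := Finset.two_lt_card_iff.1 h3
  simp only [Finset.mem_sdiff, Finset.mem_univ, true_and, Finset.mem_insert,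
    Finset.mem_singleton, not_or] at ha hb hz
  obtain ⟨M, hM1, hMout, -⟩ := K u v huv hM
  have eaz := hMout a z ha.1 ha.2 hz.1 hz.2 haz
  have ebz := hMout b z hb.1 hb.2 hz.1 hz.2 hbz
  have eab := hMout a b ha.1 ha.2 hb.1 hb.2 hab
  obtain ⟨M1, -, o1, i1⟩ := K a z haz (by omega)
  obtain ⟨M2, -, o2, -⟩ := K b z hbz (by omega)
  obtain ⟨M3, -, o3, -⟩ := K a b hab (by omega)
  have f1 := o1 u v (Ne.symm ha.1) (Ne.symm hz.1) (Ne.symm ha.2) (Ne.symm hz.2) huv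
  have f2 := i1 u (Ne.symm ha.1) (Ne.symm hz.1)
  have f3 := o2 u v (Ne.symm hb.1) (Ne.symm hz.1) (Ne.symm hb.2) (Ne.symm hz.2) huv
  have f4 := o2 u a (Ne.symm hb.1) (Ne.symm hz.1) hab haz (Ne.symm ha.1)
  have f5 := o3 u v (Ne.symm ha.1) (Ne.symm hb.1) (Ne.symm ha.2) (Ne.symm hb.2) huv
  have f6 := o3 u z (Ne.symm ha.1) (Ne.symm hb.1) (Ne.symm haz) (Ne.symm hbz) (Ne.symm hz.1)
  omega

end graph

end GMLC

/-- **Log-concavity for graphical matroids with the binomial bound.**  For a simple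
connected graph `G` on `N` vertices and `1 ≤ k ≤ N - 2`:
`I(k)² ≥ (1 + 1/k)·(1 + 1/(C(N-k+1,2) - 1))·I(k-1)·I(k+1)`, and the inequality is strict
whenever `1 < k < N - 2`. -/
theorem graphical_matroid_binomial_log_concavity
    (V : Type*) [Fintype V] [DecidableEq V] (G : SimpleGraph V)
    (hconn : G.Connected)
    (k : ℕ) (hk1 : 1 ≤ k) (hk2 : k ≤ Fintype.card V - 2) :
    ((1 : ℝ) + 1 / (k : ℝ)) *
          (1 + 1 / ((Nat.choose (Fintype.card V - k + 1) 2 : ℝ) - 1)) *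
          (numForests V G (k - 1) : ℝ) * (numForests V G (k + 1) : ℝ) ≤
        (numForests V G k : ℝ) ^ 2 ∧
      (1 < k → k < Fintype.card V - 2 →
        ((1 : ℝ) + 1 / (k : ℝ)) *
            (1 + 1 / ((Nat.choose (Fintype.card V - k + 1) 2 : ℝ) - 1)) *
            (numForests V G (k - 1) : ℝ) * (numForests V G (k + 1) : ℝ) <
          (numForests V G k : ℝ) ^ 2) := by
  obtain ⟨e, rfl⟩ : ∃ e, k = e + 1 := ⟨k - 1, by omega⟩
  have hN : e + 3 ≤ Fintype.card V := by omega
  rw [show Fintype.card V - (e + 1) + 1 = Fintype.card V - e by omega,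
    show e + 1 - 1 = e by omega, show e + 1 + 1 = e + 2 by omega]
  generalize hc : (1 : ℝ) + 1 / ((Nat.choose (Fintype.card V - e) 2 : ℝ) - 1) = c
  have hnum : ∀ j, numForests V G j = GMLC.cnt (GMLC.GInd G) j ∅ := by
    intro j
    unfold numForests GMLC.cnt
    congr 1
    ext F
    simp only [Finset.mem_filter, Finset.mem_univ, true_and, GMLC.GInd, Finset.empty_subset]
    tauto
  have hempty : GMLC.GInd G ∅ := ⟨by simp, by simp⟩
  obtain ⟨H, HE⟩ := GMLC.complex_main e c (GMLC.GInd_hered G)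
    (fun S hS h => GMLC.GInd_ext G hconn S hS (by omega))
    (fun S a b x h1 h2 h3 h4 h5 h6 h7 h8 h9 => GMLC.GInd_par G S a b x h1 h2 h3 h4 h5 h6 h7 h8 h9)
    (fun S hS hcard => (GMLC.graph_base G e S hS hcard hN c hc.symm).1) e ∅ hempty (by simp)
  have hq : ∑ a, GMLC.qS (GMLC.GInd G) e ∅ a = ((e : ℝ) + 1) * numForests V G (e + 1) := by
    have := GMLC.wt_sum (GMLC.GInd G) (e + 1) 0 (by omega) ∅ (by simp)
    unfold GMLC.qS
    rw [Finset.card_empty, this, hnum]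
    simp [GMLC.wt]
  have hp : ∑ a, ∑ b, GMLC.PS (GMLC.GInd G) e ∅ a b =
      ((e : ℝ) + 2) * ((e : ℝ) + 1) * numForests V G (e + 2) := by
    have h1 := GMLC.wt_sum (GMLC.GInd G) (e + 2) 0 (by omega) ∅ (by simp)
    have h2 : ∀ a, ∑ b, GMLC.PS (GMLC.GInd G) e ∅ a b =
        ((e : ℝ) + 1) * GMLC.wt (GMLC.GInd G) (e + 2) 1 (insert a ∅) := by
      intro a
      have h3 := GMLC.wt_sum (GMLC.GInd G) (e + 2) 1 (by omega) (insert a ∅) (by simp)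
      rw [Finset.sum_congr rfl fun b _ => GMLC.PS_symm (GMLC.GInd G) e ∅ a b]
      unfold GMLC.PS
      rw [Finset.card_empty]
      refine h3.trans ?_
      push_cast
      ring
    rw [Finset.sum_congr rfl fun a _ => h2 a, ← Finset.mul_sum]
    rw [zero_add] at h1
    rw [h1, hnum]
    simp [GMLC.wt]
    ring
  have hr : GMLC.rS (GMLC.GInd G) e c ∅ = c * numForests V G e := by
    unfold GMLC.rS GMLC.wt
    rw [if_pos rfl, hnum]
  have hmain := H (fun _ => 0) 1
  simp only [GMLC.Quad_zero_one, GMLC.Lin_zero_one] at hmain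
  rw [hp, hq, hr] at hmain
  unfold GMLC.EqAt at HE
  rw [hp, hq, hr] at HE
  have he : (0 : ℝ) < (e : ℝ) + 1 := by positivity
  have hfac : (1 : ℝ) + 1 / ((e + 1 : ℕ) : ℝ) = ((e : ℝ) + 2) / ((e : ℝ) + 1) := by
    push_cast
    field_simp
    ring
  rw [hfac]
  generalize (numForests V G e : ℝ) = A at *
  generalize (numForests V G (e + 1) : ℝ) = B at *
  generalize (numForests V G (e + 2) : ℝ) = D at *
  have hscale : ((e : ℝ) + 2) * ((e : ℝ) + 1) * D * (c * A) =
      ((e : ℝ) + 1) ^ 2 * (((e : ℝ) + 2) / ((e : ℝ) + 1) * c * A * D) := by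
    field_simp
  have hle : ((e : ℝ) + 2) / ((e : ℝ) + 1) * c * A * D ≤ B ^ 2 := by
    rw [hscale, mul_pow] at hmain
    exact le_of_mul_le_mul_left hmain (by positivity)
  refine ⟨hle, fun h1 h2 => lt_of_le_of_ne hle fun heq => ?_⟩
  refine GMLC.no_uniform G hconn e (by omega) (by omega) fun S hS hcard => ?_
  refine (GMLC.graph_base G e S hS hcard hN c hc.symm).2 ?_
  refine HE ?_ S (Finset.empty_subset _) hS hcard
  rw [hscale, heq, mul_pow]
end
end
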